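/- (Prolate spheroidal double layer potential, interior evaluation.) Fix a > 0, u₀ > 1, and integers n ≥ 0, 0 ≤ m ≤ n. Let the density be μ(s,t) = Y_n^m(s,t). Then for every interior target point x = Φ(u,v,φ) with 1 < u < u₀, v ∈ (−1,1), φ ∈ ℝ, the double layer potential satisfies D[μ](x) = ((n−m)!/(n+m)!)·(−1)^m·(u₀^2−1)·(Q_n^m)′(u₀)·P_n^m(u)·Y_n^m(v,φ). -/

import Mathlib

noncomputable section

open Real MeasureTheory

/-- Legendre polynomial via Rodrigues' formula. -/
def legendreP (n : ℕ) (x : ℝ) : ℝ :=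
  (1 / (2 ^ n * (n.factorial : ℝ))) * iteratedDeriv n (fun y : ℝ => (y ^ 2 - 1) ^ n) x

/-- Legendre function of the second kind (Neumann's integral), for `x > 1`. -/
def legendreQ (n : ℕ) (x : ℝ) : ℝ :=
  (1 / 2) * ∫ t in (-1 : ℝ)..1, legendreP n t / (x - t)

/-- Associated Legendre function of the first kind, off the cut (`x > 1`). -/
def assocP (n m : ℕ) (x : ℝ) : ℝ :=
  Real.sqrt (x ^ 2 - 1) ^ m * iteratedDeriv m (legendreP n) x

/-- Associated Legendre function of the second kind, off the cut (`x > 1`). -/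
def assocQ (n m : ℕ) (x : ℝ) : ℝ :=
  Real.sqrt (x ^ 2 - 1) ^ m * iteratedDeriv m (legendreQ n) x

/-- Ferrers function of the first kind, on the cut (`-1 ≤ v ≤ 1`). -/
def ferrersP (n m : ℕ) (v : ℝ) : ℝ :=
  Real.sqrt (1 - v ^ 2) ^ m * iteratedDeriv m (legendreP n) v

/-- Prolate spheroidal coordinate map. -/
def prolate (a u v φ : ℝ) : EuclideanSpace ℝ (Fin 3) :=
  (WithLp.equiv 2 (Fin 3 → ℝ)).symm
    ![a * Real.sqrt (u ^ 2 - 1) * Real.sqrt (1 - v ^ 2) * Real.cos φ,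
      a * Real.sqrt (u ^ 2 - 1) * Real.sqrt (1 - v ^ 2) * Real.sin φ,
      a * u * v]

/-- Surface spheroidal (= spherical) harmonic `Y_n^m(v, φ)`. -/
def sphY (n m : ℕ) (v φ : ℝ) : ℂ :=
  ((Real.sqrt ((2 * (n : ℝ) + 1) / (4 * Real.pi)) *
      Real.sqrt (((n - m).factorial : ℝ) / ((n + m).factorial : ℝ)) * ferrersP n m v : ℝ) : ℂ) *
    Complex.exp (Complex.I * m * φ)

/-- Outward unit normal on the prolate spheroid `u = u₀`, at surface parameters `(s, t)`. -/
def unitNormalP (a u₀ s t : ℝ) : EuclideanSpace ℝ (Fin 3) :=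
  ‖deriv (fun w => prolate a w s t) u₀‖⁻¹ • deriv (fun w => prolate a w s t) u₀

/-- Surface area element on the prolate spheroid `u = u₀`. -/
def areaElemP (a u₀ s : ℝ) : ℝ := a ^ 2 * Real.sqrt (u₀ ^ 2 - s ^ 2) * Real.sqrt (u₀ ^ 2 - 1)

/-- Laplace double layer potential on the prolate spheroid `u = u₀`. -/
def doubleLayerP (a u₀ : ℝ) (μ : ℝ → ℝ → ℂ) (x : EuclideanSpace ℝ (Fin 3)) : ℂ :=
  ∫ t in (0 : ℝ)..(2 * Real.pi), ∫ s in (-1 : ℝ)..1,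
    ((((inner ℝ (unitNormalP a u₀ s t) (x - prolate a u₀ s t) : ℝ) /
        (4 * Real.pi * ‖x - prolate a u₀ s t‖ ^ 3)) * areaElemP a u₀ s : ℝ) : ℂ) * μ s t

section PartA

lemma iteratedDeriv_polyEval (j : ℕ) (p : Polynomial ℝ) :
    iteratedDeriv j (fun x => p.eval x) = fun x => (Polynomial.derivative^[j] p).eval x := by
  induction j with
  | zero => simp
  | succ j ih =>
    rw [iteratedDeriv_succ, ih]
    funext x
    rw [Polynomial.deriv, Function.iterate_succ_apply']

/-- The Legendre polynomial as a polynomial. -/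
def LP (n : ℕ) : Polynomial ℝ :=
  Polynomial.C (1 / (2 ^ n * (n.factorial : ℝ))) *
    Polynomial.derivative^[n] ((Polynomial.X ^ 2 - 1) ^ n)

lemma legendreP_eq (n : ℕ) : legendreP n = fun x => (LP n).eval x := by
  funext x
  have : (fun y : ℝ => (y ^ 2 - 1) ^ n) =
      fun y => (((Polynomial.X ^ 2 - 1) ^ n : Polynomial ℝ)).eval y := by
    funext y; simp
  rw [legendreP, this, iteratedDeriv_polyEval, LP]
  simp

/-- `m`-th derivative of the Legendre polynomial. -/
def LPd (n m : ℕ) (x : ℝ) : ℝ := (Polynomial.derivative^[m] (LP n)).eval x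

lemma iteratedDeriv_legendreP (n m : ℕ) : iteratedDeriv m (legendreP n) = LPd n m := by
  rw [legendreP_eq, iteratedDeriv_polyEval]; rfl

lemma LPd_hasDerivAt (n m : ℕ) (x : ℝ) : HasDerivAt (LPd n m) (LPd n (m+1) x) x := by
  unfold LPd
  rw [Function.iterate_succ_apply']
  exact Polynomial.hasDerivAt _ _

lemma LPd_continuous (n m : ℕ) : Continuous (LPd n m) := by
  unfold LPd; fun_prop

open Polynomial in
lemma rodrigues_ode (n j : ℕ) :
    ((X : ℝ[X]) ^ 2 - 1) * derivative^[j+2] ((X ^ 2 - 1) ^ n)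
      + C (2 * (j + 1) - 2 * n : ℝ) * X * derivative^[j+1] ((X ^ 2 - 1) ^ n)
      + C (j * (j + 1) - 2 * n * j - 2 * n : ℝ) * derivative^[j] ((X ^ 2 - 1) ^ n) = 0 := by
  have hC : (C (2:ℝ) : ℝ[X]) = 2 := rfl
  induction j with
  | zero =>
    have h1 : ((X : ℝ[X]) ^ 2 - 1) * derivative ((X ^ 2 - 1) ^ n)
        = C (2 * n : ℝ) * X * (X ^ 2 - 1) ^ n := by
      cases n with
      | zero => simp
      | succ k =>
        rw [derivative_pow]
        simp [hC]
        ring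
    have h2 := congrArg derivative h1
    simp only [derivative_mul, derivative_sub, derivative_X_pow, derivative_one,
      derivative_C, derivative_X] at h2
    simp only [Function.iterate_succ_apply', Function.iterate_zero, id, zero_add]
    simp [hC] at h2 ⊢
    linear_combination h2
  | succ j ih =>
    have h2 := congrArg derivative ih
    simp only [derivative_mul, derivative_sub, derivative_X_pow, derivative_one,
      derivative_C, derivative_X, derivative_add, ← Function.iterate_succ_apply' derivative] at h2
    simp [hC] at h2 ⊢
    linear_combination h2

lemma LPd_ode (n m : ℕ) (x : ℝ) :
    (x ^ 2 - 1) * LPd n (m+2) x + 2 * (m + 1) * x * LPd n (m+1) x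
      - (n * (n + 1) - m * (m + 1)) * LPd n m x = 0 := by
  have h := congrArg (Polynomial.eval x) (rodrigues_ode n (n + m))
  have e : ∀ j, LPd n j x = (1 / (2 ^ n * (n.factorial : ℝ))) *
      (Polynomial.derivative^[n + j] ((Polynomial.X ^ 2 - 1) ^ n)).eval x := by
    intro j
    rw [LPd, LP, Polynomial.iterate_derivative_C_mul, ← Function.iterate_add_apply, add_comm j n]
    simp
  rw [e, e, e]
  simp [-Function.iterate_succ] at h
  rw [show n + m + 2 = n + (m+2) by ring, show n + m + 1 = n + (m+1) by ring] at h
  linear_combination (1 / (2 ^ n * (n.factorial : ℝ))) * h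

lemma LPd_one (n : ℕ) : LPd n 0 1 = 1 := by
  have h : ((Polynomial.X : Polynomial ℝ) ^ 2 - 1) ^ n =
      (Polynomial.X - Polynomial.C 1) ^ n * (Polynomial.X + 1) ^ n := by
    rw [← mul_pow]; congr 1; simp; ring
  simp only [LPd, LP, Function.iterate_zero, id]
  rw [h, Polynomial.eval_mul, Polynomial.iterate_derivative_mul, Polynomial.eval_finsetSum,
    Finset.sum_eq_single 0]
  · rw [Nat.sub_zero, Polynomial.iterate_derivative_X_sub_pow_self]
    simp
    field_simp
    norm_num
  · intro b hb hb0
    rw [Polynomial.iterate_derivative_X_sub_pow]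
    have : n - (n - b) ≠ 0 := by
      have := Finset.mem_range.1 hb
      omega
    simp [this]
  · simp

end PartA

section PartB

lemma hasDerivAt_setIntegral_compact {α : Type*} [TopologicalSpace α] [MeasurableSpace α]
    [OpensMeasurableSpace α] [T2Space α] {μ : Measure α} [IsFiniteMeasureOnCompacts μ]
    {K : Set α} (hK : IsCompact K) (hKm : MeasurableSet K) {U : Set ℝ} (hU : IsOpen U)
    {F F' : ℝ → α → ℝ} (hF : ∀ x ∈ U, ContinuousOn (F x) K)
    (hF' : ContinuousOn (Function.uncurry F') (U ×ˢ K))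
    (hd : ∀ x ∈ U, ∀ z ∈ K, HasDerivAt (fun y => F y z) (F' x z) x) {x₀ : ℝ} (hx₀ : x₀ ∈ U) :
    HasDerivAt (fun x => ∫ z in K, F x z ∂μ) (∫ z in K, F' x₀ z ∂μ) x₀ := by
  obtain ⟨ε, hε, hball⟩ := Metric.isOpen_iff.1 hU x₀ hx₀
  have hsub : Metric.closedBall x₀ (ε/2) ⊆ U :=
    (Metric.closedBall_subset_ball (by linarith)).trans hball
  have hcomp : IsCompact (Metric.closedBall x₀ (ε/2) ×ˢ K) := (isCompact_closedBall _ _).prod hK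
  obtain ⟨C, hC⟩ := hcomp.exists_bound_of_continuousOn
    (hF'.mono (Set.prod_mono hsub le_rfl))
  have hF'x : ∀ x ∈ U, ContinuousOn (F' x) K := fun x hx =>
    hF'.comp (f := fun z => (x, z)) (by fun_prop) (fun z hz => ⟨hx, hz⟩)
  refine (hasDerivAt_integral_of_dominated_loc_of_deriv_le (bound := fun _ => C)
    (s := Metric.closedBall x₀ (ε/2)) (Metric.closedBall_mem_nhds _ (by linarith)) ?_ ?_ ?_ ?_ ?_ ?_).2
  · filter_upwards [hU.mem_nhds hx₀] with x hx
    exact (hF x hx).aestronglyMeasurable_of_isCompact hK hKm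
  · exact (hF x₀ hx₀).integrableOn_compact hK
  · exact (hF'x x₀ hx₀).aestronglyMeasurable_of_isCompact hK hKm
  · refine (ae_restrict_iff' hKm).2 (Filter.Eventually.of_forall ?_)
    intro z hz x hx
    exact hC (x, z) ⟨hx, hz⟩
  · exact (continuousOn_const : ContinuousOn (fun _ : α => C) K).integrableOn_compact hK
  · refine (ae_restrict_iff' hKm).2 (Filter.Eventually.of_forall ?_)
    intro z hz x hx
    exact hd x (hsub hx) z hz

/-- `j`-th derivative of the Legendre function of the second kind. -/
def LQd (n j : ℕ) (x : ℝ) : ℝ :=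
  (1 / 2) * ∫ t in Set.Icc (-1 : ℝ) 1, LPd n 0 t * ((-1) ^ j * (j.factorial : ℝ)) / (x - t) ^ (j + 1)

lemma legendreQ_eq (n : ℕ) (x : ℝ) : legendreQ n x = LQd n 0 x := by
  rw [legendreQ, LQd, intervalIntegral.integral_of_le (by norm_num), integral_Icc_eq_integral_Ioc,
    legendreP_eq]
  simp [LPd]

lemma LQd_hasDerivAt (n j : ℕ) {x : ℝ} (hx : 1 < x) :
    HasDerivAt (LQd n j) (LQd n (j+1) x) x := by
  unfold LQd
  refine HasDerivAt.const_mul _ ?_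
  have hp := LPd_continuous n 0
  refine hasDerivAt_setIntegral_compact (U := Set.Ioi 1)
    (F := fun x t => LPd n 0 t * ((-1) ^ j * (j.factorial : ℝ)) / (x - t) ^ (j + 1))
    (F' := fun x t => LPd n 0 t * ((-1) ^ (j+1) * ((j+1).factorial : ℝ)) / (x - t) ^ (j + 1 + 1))
    isCompact_Icc measurableSet_Icc isOpen_Ioi ?_ ?_ ?_ hx
  · intro y hy
    refine ContinuousOn.div (by fun_prop) (by fun_prop) ?_
    intro t ht
    have : 0 < y - t := by have := ht.2; have : 1 < y := hy; linarith
    positivity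
  · refine ContinuousOn.div (by fun_prop) (by fun_prop) ?_
    rintro ⟨y, t⟩ ⟨hy, ht⟩
    have : 0 < y - t := by have := ht.2; have h2 : (1:ℝ) < y := hy; have h3 : t ≤ 1 := ht.2; linarith
    simp only
    positivity
  · intro y hy t ht
    have h0 : 0 < y - t := by have := ht.2; have : 1 < y := hy; linarith
    have h1 : HasDerivAt (fun y : ℝ => (y - t) ^ (j+1)) (((j+1 : ℕ) : ℝ) * (y - t) ^ j * 1) y := by
      have := ((hasDerivAt_id y).sub_const t).fun_pow (j+1)
      simpa using this
    have h2 := (hasDerivAt_const y (LPd n 0 t * ((-1) ^ j * (j.factorial : ℝ)))).div h1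
      (by positivity)
    refine h2.congr_deriv ?_
    rw [Nat.factorial_succ]
    push_cast
    field_simp
    ring

lemma iteratedDeriv_legendreQ (n j : ℕ) : ∀ x : ℝ, 1 < x →
    iteratedDeriv j (legendreQ n) x = LQd n j x := by
  induction j with
  | zero => intro x _; simp [legendreQ_eq]
  | succ j ih =>
    intro x hx
    rw [iteratedDeriv_succ]
    have : iteratedDeriv j (legendreQ n) =ᶠ[nhds x] LQd n j := by
      filter_upwards [isOpen_Ioi.mem_nhds hx] with y hy using ih y hy
    rw [this.deriv_eq, (LQd_hasDerivAt n j hx).deriv]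

lemma LQd_ode_zero (n : ℕ) {x : ℝ} (hx : 1 < x) :
    (x ^ 2 - 1) * LQd n 2 x + 2 * x * LQd n 1 x - n * (n + 1) * LQd n 0 x = 0 := by
  have hp := LPd_continuous n 0
  have hp1 := LPd_continuous n 1
  have hp2 := LPd_continuous n 2
  have hne : ∀ t ∈ Set.Icc (-1:ℝ) 1, x - t ≠ 0 := fun t ht => by
    have := ht.2; intro h; linarith
  have hcont : ∀ (c : ℝ) (k : ℕ), ContinuousOn
      (fun t => LPd n 0 t * c / (x - t) ^ k) (Set.Icc (-1:ℝ) 1) := fun c k =>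
    ContinuousOn.div (by fun_prop) (by fun_prop) (fun t ht => pow_ne_zero _ (hne t ht))
  have hint : ∀ (c : ℝ) (k : ℕ), IntegrableOn
      (fun t => LPd n 0 t * c / (x - t) ^ k) (Set.Icc (-1:ℝ) 1) := fun c k =>
    (hcont c k).integrableOn_compact isCompact_Icc
  have hint2 : ∀ (a c : ℝ) (k : ℕ) (b d : ℝ) (l : ℕ), IntegrableOn
      (fun t => a * (LPd n 0 t * c / (x - t) ^ k) + b * (LPd n 0 t * d / (x - t) ^ l))
        (Set.Icc (-1:ℝ) 1) := fun a c k b d l =>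
    ((hint c k).const_mul a).add ((hint d l).const_mul b)
  have hder : ∀ t ∈ Set.uIcc (-1:ℝ) 1, HasDerivAt
      (fun t => (t^2 - 1) * (LPd n 0 t / (x - t)^2 - LPd n 1 t / (x - t)))
      ((x^2-1) * (LPd n 0 t * ((-1)^2 * (Nat.factorial 2 : ℝ)) / (x - t)^(2+1))
        + 2 * x * (LPd n 0 t * ((-1)^1 * (Nat.factorial 1 : ℝ)) / (x - t)^(1+1))
        - n * (n+1) * (LPd n 0 t * ((-1)^0 * (Nat.factorial 0 : ℝ)) / (x - t)^(0+1))) t := by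
    intro t ht
    rw [Set.uIcc_of_le (by norm_num)] at ht
    have h0 := hne t ht
    have h1 : HasDerivAt (fun t : ℝ => x - t) (-1) t := by
      simpa using (hasDerivAt_id t).const_sub x
    have h2 : HasDerivAt (fun t : ℝ => (x - t)^2) (2 * (x - t) * (-1)) t := by
      simpa using h1.fun_pow 2
    have h3 : HasDerivAt (fun t : ℝ => t^2 - 1) (2 * t) t := by
      simpa using ((hasDerivAt_id t).pow 2).sub_const 1
    have h := h3.fun_mul (((LPd_hasDerivAt n 0 t).fun_div h2 (pow_ne_zero 2 h0)).fun_sub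
      ((LPd_hasDerivAt n 1 t).fun_div h1 h0))
    refine h.congr_deriv ?_
    have ode := LPd_ode n 0 t
    simp only [Nat.factorial] at ode ⊢
    push_cast at ode ⊢
    simp only [zero_add] at ode ⊢
    have e2 : (x - t)^2 * LPd n 0 t * (n * (n+1)) =
      (x-t)^2 * ((t^2-1) * LPd n 2 t + 2 * t * LPd n 1 t) := by linear_combination -(x-t)^2 * ode
    field_simp
    linear_combination e2
  have hF := intervalIntegral.integral_eq_sub_of_hasDerivAt hder (by
    rw [intervalIntegrable_iff_integrableOn_Icc_of_le (by norm_num)]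
    exact ((((hint _ _).const_mul _).add ((hint _ _).const_mul _)).sub ((hint _ _).const_mul _)))
  rw [intervalIntegral.integral_of_le (by norm_num), ← integral_Icc_eq_integral_Ioc] at hF
  rw [integral_sub (hint2 _ _ _ _ _ _) ((hint _ _).const_mul _),
    integral_add ((hint _ _).const_mul _) ((hint _ _).const_mul _), integral_const_mul,
    integral_const_mul, integral_const_mul] at hF
  unfold LQd
  norm_num at hF ⊢
  linear_combination (1/2) * hF

lemma LQd_ode (n m : ℕ) : ∀ x : ℝ, 1 < x →
    (x ^ 2 - 1) * LQd n (m+2) x + 2 * (m + 1) * x * LQd n (m+1) x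
      - (n * (n + 1) - m * (m + 1)) * LQd n m x = 0 := by
  induction m with
  | zero => intro x hx; have := LQd_ode_zero n hx; simp; linear_combination this
  | succ m ih =>
    intro x hx
    have h3 : HasDerivAt (fun t : ℝ => t^2 - 1) (2 * x) x := by
      simpa using ((hasDerivAt_id x).pow 2).sub_const 1
    have h4 : HasDerivAt (fun t : ℝ => 2 * ((m:ℝ) + 1) * t) (2 * ((m:ℝ)+1)) x := by
      simpa using (hasDerivAt_id x).const_mul (2 * ((m:ℝ) + 1))
    have h := ((h3.mul (LQd_hasDerivAt n (m+2) hx)).add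
      (h4.mul (LQd_hasDerivAt n (m+1) hx))).sub
      ((LQd_hasDerivAt n m hx).const_mul ((n:ℝ) * (n + 1) - m * (m + 1)))
    have h0 := h.unique ((hasDerivAt_const x (0:ℝ)).congr_of_eventuallyEq (by
      filter_upwards [isOpen_Ioi.mem_nhds hx] with y hy using ih y hy))
    push_cast
    linear_combination h0

lemma integral_inv_sub {x : ℝ} (hx : 1 < x) :
    ∫ t in Set.Icc (-1:ℝ) 1, 1 / (x - t) = Real.log (x + 1) - Real.log (x - 1) := by
  rw [integral_Icc_eq_integral_Ioc, ← intervalIntegral.integral_of_le (by norm_num)]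
  have := intervalIntegral.integral_eq_sub_of_hasDerivAt (a := (-1:ℝ)) (b := 1)
    (f := fun t => - Real.log (x - t)) (f' := fun t => 1 / (x - t)) ?_ ?_
  · rw [this]; ring_nf
  · intro t ht
    rw [Set.uIcc_of_le (by norm_num)] at ht
    have h0 : x - t ≠ 0 := by have := ht.2; intro h; linarith
    have h1 : HasDerivAt (fun t : ℝ => x - t) (-1) t := by
      simpa using (hasDerivAt_id t).const_sub x
    refine (h1.log h0).neg.congr_deriv ?_
    field_simp
  · apply ContinuousOn.intervalIntegrable
    refine ContinuousOn.div (by fun_prop) (by fun_prop) ?_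
    intro t ht
    rw [Set.uIcc_of_le (by norm_num)] at ht
    have := ht.2; intro h; linarith

lemma abs_integral_div_le {F : ℝ → ℝ} (hF : Continuous F) : ∃ C, ∀ x : ℝ, 1 < x →
    |∫ t in Set.Icc (-1:ℝ) 1, F t / (x - t)| ≤ C * (Real.log (x + 1) - Real.log (x - 1)) := by
  obtain ⟨C, hC⟩ := (isCompact_Icc (a := (-1:ℝ)) (b := 1)).exists_bound_of_continuousOn
    hF.continuousOn
  refine ⟨C, fun x hx => ?_⟩
  rw [← integral_inv_sub hx, ← integral_const_mul, ← Real.norm_eq_abs]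
  refine norm_integral_le_of_norm_le ?_ ?_
  · refine (ContinuousOn.mul continuousOn_const (ContinuousOn.div (by fun_prop) (by fun_prop) ?_)).integrableOn_compact isCompact_Icc
    intro t ht; have := ht.2; intro h; linarith
  · refine (ae_restrict_iff' measurableSet_Icc).2 (Filter.Eventually.of_forall ?_)
    intro t ht
    have h0 : 0 < x - t := by have := ht.2; linarith
    rw [norm_div, Real.norm_eq_abs (x - t), abs_of_pos h0, mul_one_div]
    exact div_le_div_of_nonneg_right (hC t ht) h0.le

/-- Wronskian-type quantity -/
def LV (n m : ℕ) (x : ℝ) : ℝ :=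
  (x^2 - 1)^(m+1) * (LPd n m x * LQd n (m+1) x - LQd n m x * LPd n (m+1) x)

lemma LV_succ (n m : ℕ) {x : ℝ} (hx : 1 < x) :
    LV n (m+1) x = - (n * (n + 1) - m * (m + 1)) * LV n m x := by
  unfold LV
  have h1 := LPd_ode n m x
  have h2 := LQd_ode n m x hx
  linear_combination (x^2-1)^(m+1) * (LPd n (m+1) x * h2 - LQd n (m+1) x * h1)

lemma LV_zero_const (n : ℕ) : ∃ c, ∀ x, 1 < x → LV n 0 x = c := by
  have hd : ∀ x : ℝ, 1 < x → HasDerivAt (LV n 0) 0 x := by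
    intro x hx
    have h3 : HasDerivAt (fun t : ℝ => (t^2 - 1)^(0+1)) (2 * x) x := by
      simpa using ((hasDerivAt_id x).pow 2).sub_const 1
    have h := h3.mul (((LPd_hasDerivAt n 0 x).mul (LQd_hasDerivAt n (0+1) hx)).sub
      ((LQd_hasDerivAt n 0 hx).mul (LPd_hasDerivAt n (0+1) x)))
    refine h.congr_deriv ?_
    have h1 := LPd_ode n 0 x
    have h2 := LQd_ode n 0 x hx
    simp at h1 h2 ⊢
    linear_combination LPd n 0 x * h2 - LQd n 0 x * h1
  refine ⟨LV n 0 2, fun x hx => ?_⟩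
  have := isOpen_Ioi.is_const_of_deriv_eq_zero (s := Set.Ioi (1:ℝ)) (f := LV n 0)
    isPreconnected_Ioi (fun y hy => (hd y hy).differentiableAt.differentiableWithinAt)
    (fun y hy => (hd y hy).deriv) (x := x) (y := 2) hx (by norm_num)
  exact this

lemma LQd_one_eq (n : ℕ) {x : ℝ} (hx : 1 < x) :
    (x^2-1) * LQd n 1 x = -(1/2) * ((x + 1) * LPd n 0 1 - (x - 1) * LPd n 0 (-1))
      + (x^2-1) * ((1/2) * ∫ t in Set.Icc (-1:ℝ) 1, LPd n 1 t / (x - t)) := by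
  have hp := LPd_continuous n 0
  have hp1 := LPd_continuous n 1
  have hne : ∀ t ∈ Set.Icc (-1:ℝ) 1, x - t ≠ 0 := fun t ht => by
    have := ht.2; intro h; linarith
  have hi1 : IntegrableOn (fun t => LPd n 1 t / (x - t)) (Set.Icc (-1:ℝ) 1) :=
    (ContinuousOn.div (by fun_prop) (by fun_prop) (fun t ht => (hne t ht))).integrableOn_compact isCompact_Icc
  have hi2 : IntegrableOn (fun t => LPd n 0 t * ((-1) ^ 1 * (Nat.factorial 1 : ℝ)) / (x - t) ^ (1 + 1)) (Set.Icc (-1:ℝ) 1) :=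
    (ContinuousOn.div (by fun_prop) (by fun_prop) (fun t ht => pow_ne_zero _ (hne t ht))).integrableOn_compact isCompact_Icc
  have hder : ∀ t ∈ Set.uIcc (-1:ℝ) 1, HasDerivAt (fun t => LPd n 0 t / (x - t))
      (LPd n 1 t / (x - t) - LPd n 0 t * ((-1) ^ 1 * (Nat.factorial 1 : ℝ)) / (x - t) ^ (1 + 1)) t := by
    intro t ht
    rw [Set.uIcc_of_le (by norm_num)] at ht
    have h0 := hne t ht
    have h1 : HasDerivAt (fun t : ℝ => x - t) (-1) t := by
      simpa using (hasDerivAt_id t).const_sub x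
    refine ((LPd_hasDerivAt n 0 t).div h1 h0).congr_deriv ?_
    simp
    field_simp
    ring
  have hF := intervalIntegral.integral_eq_sub_of_hasDerivAt hder (by
    rw [intervalIntegrable_iff_integrableOn_Icc_of_le (by norm_num)]
    exact hi1.sub hi2)
  rw [intervalIntegral.integral_of_le (by norm_num), ← integral_Icc_eq_integral_Ioc,
    integral_sub hi1 hi2] at hF
  have h1 : x - 1 ≠ 0 := by intro h; linarith
  have h2 : x + 1 ≠ 0 := by intro h; linarith
  rw [sub_neg_eq_add] at hF
  unfold LQd
  have e1 : (x^2-1) * (LPd n 0 1 / (x - 1) - LPd n 0 (-1) / (x + 1))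
    = (x + 1) * LPd n 0 1 - (x - 1) * LPd n 0 (-1) := by field_simp; ring
  linear_combination -(1/2) * (x^2-1) * hF - (1/2) * e1

lemma tendsto_sq_mul_log : Filter.Tendsto
    (fun x : ℝ => (x^2-1) * (Real.log (x + 1) - Real.log (x - 1))) (nhdsWithin 1 (Set.Ioi 1)) (nhds 0) := by
  have h1 : Filter.Tendsto (fun x : ℝ => (x^2-1) * Real.log (x+1) - (x+1) * ((x-1) * Real.log (x-1)))
      (nhds 1) (nhds ((1^2-1) * Real.log (1+1) - (1+1) * ((1-1) * Real.log (1-1)))) := by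
    refine Filter.Tendsto.sub (Filter.Tendsto.mul (by apply Continuous.tendsto; fun_prop) ?_) (Filter.Tendsto.mul (by apply Continuous.tendsto; fun_prop) ?_)
    · exact (ContinuousAt.log (by fun_prop) (by norm_num)).tendsto
    · exact (Real.continuous_mul_log.comp (continuous_id.sub continuous_const : Continuous fun x : ℝ => x - 1)).tendsto 1
  norm_num at h1
  refine (h1.mono_left nhdsWithin_le_nhds).congr ?_
  intro x; ring

lemma LV_zero (n : ℕ) {x : ℝ} (hx : 1 < x) : LV n 0 x = -1 := by
  obtain ⟨c, hc⟩ := LV_zero_const n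
  rw [hc x hx]
  have hp := LPd_continuous n 0
  have hp1 := LPd_continuous n 1
  have key : ∀ F : ℝ → ℝ, Continuous F → Filter.Tendsto
      (fun x : ℝ => (x^2-1) * ((1/2) * ∫ t in Set.Icc (-1:ℝ) 1, F t / (x - t)))
      (nhdsWithin 1 (Set.Ioi 1)) (nhds 0) := by
    intro F hF
    obtain ⟨C, hC⟩ := abs_integral_div_le hF
    have h2 := tendsto_sq_mul_log.const_mul (C/2)
    rw [mul_zero] at h2
    refine squeeze_zero_norm' ?_ h2
    filter_upwards [self_mem_nhdsWithin] with y hy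
    have hy' : 1 < y := hy
    have h0 : 0 ≤ y^2-1 := by nlinarith
    rw [Real.norm_eq_abs, abs_mul, abs_mul, abs_of_nonneg h0, abs_of_pos (by norm_num : (0:ℝ) < 1/2)]
    have := mul_le_mul_of_nonneg_left (hC y hy') h0
    linarith
  have k0 := key _ hp
  have k1 := key _ hp1
  have t0 : Filter.Tendsto (LPd n 0) (nhdsWithin 1 (Set.Ioi 1)) (nhds (LPd n 0 1)) :=
    (hp.tendsto 1).mono_left nhdsWithin_le_nhds
  have t1 : Filter.Tendsto (LPd n 1) (nhdsWithin 1 (Set.Ioi 1)) (nhds (LPd n 1 1)) :=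
    (hp1.tendsto 1).mono_left nhdsWithin_le_nhds
  have t2 : Filter.Tendsto (fun x : ℝ => -(1/2) * ((x + 1) * LPd n 0 1 - (x - 1) * LPd n 0 (-1)))
      (nhdsWithin 1 (Set.Ioi 1)) (nhds (-(1/2) * ((1 + 1) * LPd n 0 1 - (1 - 1) * LPd n 0 (-1)))) := by
    refine Filter.Tendsto.mono_left ?_ nhdsWithin_le_nhds
    apply Continuous.tendsto (x := (1:ℝ)) (f := fun x : ℝ => -(1/2) * ((x + 1) * LPd n 0 1 - (x - 1) * LPd n 0 (-1)))
    fun_prop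
  have lim := (t0.mul (t2.add k1)).sub (t1.mul k0)
  have lim2 : Filter.Tendsto (fun _ : ℝ => c) (nhdsWithin 1 (Set.Ioi 1)) (nhds (-1)) := by
    refine (lim.congr' ?_).trans_eq ?_
    · filter_upwards [self_mem_nhdsWithin] with y hy
      have hy' : 1 < y := hy
      rw [← hc y hy', LV, ← LQd_one_eq n hy']
      have : LQd n 0 y = (1/2) * ∫ t in Set.Icc (-1:ℝ) 1, LPd n 0 t / (y - t) := by
        simp [LQd]
      rw [← this]
      simp
      ring
    · rw [LPd_one]; norm_num
  exact tendsto_nhds_unique tendsto_const_nhds lim2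

lemma LV_eq (n m : ℕ) (hm : m ≤ n) {x : ℝ} (hx : 1 < x) :
    LV n m x * ((n - m).factorial : ℝ) = - (-1)^m * ((n+m).factorial : ℝ) := by
  induction m with
  | zero => simp [LV_zero n hx]
  | succ m ih =>
    have ih := ih (by omega)
    obtain ⟨k, rfl⟩ : ∃ k, n = m + 1 + k := ⟨n - (m+1), by omega⟩
    rw [LV_succ _ _ hx]
    rw [show m + 1 + k - m = k + 1 by omega, Nat.factorial_succ] at ih
    rw [show m + 1 + k - (m+1) = k by omega, show m + 1 + k + (m + 1) = (m+1+k+m) + 1 by omega,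
      Nat.factorial_succ]
    push_cast at ih ⊢
    rw [pow_succ]
    linear_combination -((m:ℝ) + 1 + k + m + 1) * ih

lemma LQd_bound (n j : ℕ) : ∃ C, ∀ x : ℝ, 2 ≤ x → |LQd n j x| * x^(j+1) ≤ C := by
  obtain ⟨C, hC⟩ := (isCompact_Icc (a := (-1:ℝ)) (b := 1)).exists_bound_of_continuousOn
    (f := fun t => LPd n 0 t * ((-1) ^ j * (j.factorial : ℝ)))
    (by have := LPd_continuous n 0; fun_prop)
  refine ⟨C * 2^(j+1), fun x hx => ?_⟩
  have hx0 : 0 < x := by linarith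
  have h1 : ‖∫ t in Set.Icc (-1 : ℝ) 1, LPd n 0 t * ((-1) ^ j * (j.factorial : ℝ)) / (x - t) ^ (j + 1)‖
      ≤ C / (x/2)^(j+1) * (volume (Set.Icc (-1:ℝ) 1)).toReal := by
    refine norm_setIntegral_le_of_norm_le_const (by simp) ?_
    intro t ht
    have h0 : x/2 ≤ x - t := by have := ht.2; linarith
    rw [norm_div, norm_pow, Real.norm_eq_abs (x-t), abs_of_pos (by linarith)]
    have hC0 : 0 ≤ C := (norm_nonneg _).trans (hC t ht)
    exact div_le_div₀ hC0 (hC t ht) (by positivity) (by gcongr)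
  have hv : (volume (Set.Icc (-1:ℝ) 1)).toReal = 2 := by simp; norm_num
  rw [hv, Real.norm_eq_abs] at h1
  unfold LQd
  rw [abs_mul, abs_of_pos (by norm_num : (0:ℝ) < 1/2)]
  have h2 : C / (x/2)^(j+1) * x^(j+1) = C * 2^(j+1) := by
    rw [div_pow]; field_simp
  rw [← h2]
  have := pow_pos hx0 (j+1)
  nlinarith [mul_le_mul_of_nonneg_right h1 this.le]

end PartB

section PartC

def RR (A β η θ τ : ℝ) : ℝ :=
  (cosh η * cos θ - A)^2 + (sinh η * sin θ)^2 - 2*β*sinh η*sin θ*cos τ + β^2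
def RR1 (A β η θ τ : ℝ) : ℝ :=
  2*(cosh η * cos θ - A)*(sinh η * cos θ) + 2*sinh η*cosh η*(sin θ)^2 - 2*β*cosh η*sin θ*cos τ
def RR2 (A β η θ τ : ℝ) : ℝ :=
  -2*(cosh η * cos θ - A)*(cosh η * sin θ) + 2*(sinh η)^2*sin θ * cos θ - 2*β*sinh η*cos θ*cos τ
def RR3 (β η θ τ : ℝ) : ℝ := 2*β*sinh η*sin θ*sin τ
def RR11 (A β η θ τ : ℝ) : ℝ :=
  2*(sinh η * cos θ)^2 + 2*(cosh η * cos θ - A)*(cosh η * cos θ)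
   + 2*(cosh η^2 + sinh η^2)*(sin θ)^2 - 2*β*sinh η*sin θ*cos τ
def RR22 (A β η θ τ : ℝ) : ℝ :=
  2*(cosh η * sin θ)^2 - 2*(cosh η * cos θ - A)*(cosh η * cos θ)
   + 2*(sinh η)^2*(cos θ^2 - sin θ^2) + 2*β*sinh η*sin θ*cos τ
def RR33 (β η θ τ : ℝ) : ℝ := 2*β*sinh η*sin θ*cos τ

lemma RR_id1 (A β η θ τ : ℝ) :
    RR1 A β η θ τ^2 + RR2 A β η θ τ^2 + (sinh η^2 + sin θ^2)*(4*β^2*sin τ^2)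
      = 4 * RR A β η θ τ * (sinh η^2 + sin θ^2) := by
  unfold RR RR1 RR2
  have h1 := Real.cosh_sq η
  have h2 := Real.sin_sq_add_cos_sq θ
  have h3 := Real.sin_sq_add_cos_sq τ
  generalize cosh η = x at *
  generalize sinh η = y at *
  generalize cos θ = c at *
  generalize sin θ = s at *
  generalize cos τ = d at *
  generalize sin τ = e at *
  grind

lemma RR_id2 (A β η θ τ : ℝ) :
    sinh η * sin θ * (RR11 A β η θ τ + RR22 A β η θ τ) + cosh η * sin θ * RR1 A β η θ τ
      + sinh η * cos θ * RR2 A β η θ τ + (sinh η^2 + sin θ^2) * (2 * β * cos τ)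
      = 6 * sinh η * sin θ * (sinh η^2 + sin θ^2) := by
  unfold RR11 RR22 RR1 RR2
  have h1 := Real.cosh_sq η
  have h2 := Real.sin_sq_add_cos_sq θ
  generalize cosh η = x at *
  generalize sinh η = y at *
  generalize cos θ = c at *
  generalize sin θ = s at *
  generalize cos τ = d at *
  grind

lemma RR_hasDerivAt1 (A β η θ τ : ℝ) :
    HasDerivAt (fun η => RR A β η θ τ) (RR1 A β η θ τ) η := by
  unfold RR RR1
  have h1 := Real.hasDerivAt_cosh η
  have h2 := Real.hasDerivAt_sinh η
  refine ((((((h1.mul_const (cos θ)).sub_const A).fun_pow 2).fun_add ((h2.mul_const (sin θ)).fun_pow 2)).fun_sub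
    (((h2.const_mul (2*β)).mul_const (sin θ)).mul_const (cos τ))).add_const (β^2)).congr_deriv ?_
  push_cast; ring

lemma RR_hasDerivAt2 (A β η θ τ : ℝ) :
    HasDerivAt (fun θ => RR A β η θ τ) (RR2 A β η θ τ) θ := by
  unfold RR RR2
  have h1 := Real.hasDerivAt_cos θ
  have h2 := Real.hasDerivAt_sin θ
  refine ((((((h1.const_mul (cosh η)).sub_const A).fun_pow 2).fun_add ((h2.const_mul (sinh η)).fun_pow 2)).fun_sub
    ((h2.const_mul (2*β*sinh η)).mul_const (cos τ))).add_const (β^2)).congr_deriv ?_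
  push_cast; ring

lemma RR_hasDerivAt3 (A β η θ τ : ℝ) :
    HasDerivAt (fun τ => RR A β η θ τ) (RR3 β η θ τ) τ := by
  unfold RR RR3
  have h1 := Real.hasDerivAt_cos τ
  refine (((h1.const_mul (2*β*sinh η*sin θ)).const_sub ((cosh η * cos θ - A)^2 + (sinh η * sin θ)^2)).add_const (β^2)).congr_deriv ?_
  ring

lemma RR_hasDerivAt11 (A β η θ τ : ℝ) :
    HasDerivAt (fun η => RR1 A β η θ τ) (RR11 A β η θ τ) η := by
  unfold RR1 RR11
  have h1 := Real.hasDerivAt_cosh η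
  have h2 := Real.hasDerivAt_sinh η
  refine ((((((h1.mul_const (cos θ)).sub_const A).const_mul 2).fun_mul (h2.mul_const (cos θ))).fun_add
    (((h2.const_mul 2).fun_mul h1).mul_const (sin θ^2))).fun_sub
    (((h1.const_mul (2*β)).mul_const (sin θ)).mul_const (cos τ))).congr_deriv ?_
  ring

lemma RR_hasDerivAt22 (A β η θ τ : ℝ) :
    HasDerivAt (fun θ => RR2 A β η θ τ) (RR22 A β η θ τ) θ := by
  unfold RR2 RR22
  have h1 := Real.hasDerivAt_cos θ
  have h2 := Real.hasDerivAt_sin θ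
  refine ((((((h1.const_mul (cosh η)).sub_const A).const_mul (-2)).fun_mul (h2.const_mul (cosh η))).fun_add
    ((h2.const_mul (2*(sinh η)^2)).fun_mul h1)).fun_sub
    ((h1.const_mul (2*β*sinh η)).mul_const (cos τ))).congr_deriv ?_
  ring

lemma RR_hasDerivAt33 (β η θ τ : ℝ) :
    HasDerivAt (fun τ => RR3 β η θ τ) (RR33 β η θ τ) τ := by
  unfold RR3 RR33
  exact (Real.hasDerivAt_sin τ).const_mul _

lemma RR_cont (A β : ℝ) : Continuous (fun z : ℝ × ℝ × ℝ => RR A β z.1 z.2.1 z.2.2) := by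
  unfold RR; fun_prop
lemma RR1_cont (A β : ℝ) : Continuous (fun z : ℝ × ℝ × ℝ => RR1 A β z.1 z.2.1 z.2.2) := by
  unfold RR1; fun_prop
lemma RR2_cont (A β : ℝ) : Continuous (fun z : ℝ × ℝ × ℝ => RR2 A β z.1 z.2.1 z.2.2) := by
  unfold RR2; fun_prop
lemma RR11_cont (A β : ℝ) : Continuous (fun z : ℝ × ℝ × ℝ => RR11 A β z.1 z.2.1 z.2.2) := by
  unfold RR11; fun_prop
lemma RR22_cont (A β : ℝ) : Continuous (fun z : ℝ × ℝ × ℝ => RR22 A β z.1 z.2.1 z.2.2) := by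
  unfold RR22; fun_prop

/-- derivative of `1/√R` -/
lemma hasDerivAt_inv_sqrt {R : ℝ → ℝ} {R' x : ℝ} (h : HasDerivAt R R' x) (h0 : 0 < R x) :
    HasDerivAt (fun y => 1 / √(R y)) (-R' / (2 * √(R x)^3)) x := by
  have hs : 0 < √(R x) := Real.sqrt_pos.2 h0
  refine ((hasDerivAt_const x (1:ℝ)).fun_div (h.sqrt h0.ne') hs.ne').congr_deriv ?_
  field_simp; ring

lemma hasDerivAt_inv_sqrt' {R R1 : ℝ → ℝ} {R2 x : ℝ} (h : HasDerivAt R (R1 x) x)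
    (h1 : HasDerivAt R1 R2 x) (h0 : 0 < R x) :
    HasDerivAt (fun y => -R1 y / (2 * √(R y)^3)) (-R2 / (2 * √(R x)^3) + 3 * R1 x^2 / (4 * √(R x)^5)) x := by
  have hs : 0 < √(R x) := Real.sqrt_pos.2 h0
  refine (h1.fun_neg.fun_div (((h.sqrt h0.ne').fun_pow 3).const_mul 2) (by positivity)).congr_deriv ?_
  field_simp; norm_num; ring

/-- parameter rectangle -/
def KK : Set (ℝ × ℝ) := Set.Icc 0 π ×ˢ Set.Icc (-π) π

lemma KK_compact : IsCompact KK := isCompact_Icc.prod isCompact_Icc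
lemma KK_meas : MeasurableSet KK := measurableSet_Icc.prod measurableSet_Icc

/-- Kernel and its η-derivatives. -/
def k0 (A β η θ τ : ℝ) : ℝ := 1 / √(RR A β η θ τ)
def k1 (A β η θ τ : ℝ) : ℝ := -RR1 A β η θ τ / (2 * √(RR A β η θ τ)^3)
def k11 (A β η θ τ : ℝ) : ℝ := -RR11 A β η θ τ / (2 * √(RR A β η θ τ)^3)
  + 3 * RR1 A β η θ τ^2 / (4 * √(RR A β η θ τ)^5)
def k2 (A β η θ τ : ℝ) : ℝ := -RR2 A β η θ τ / (2 * √(RR A β η θ τ)^3)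
def k22 (A β η θ τ : ℝ) : ℝ := -RR22 A β η θ τ / (2 * √(RR A β η θ τ)^3)
  + 3 * RR2 A β η θ τ^2 / (4 * √(RR A β η θ τ)^5)
def k3 (A β η θ τ : ℝ) : ℝ := -RR3 β η θ τ / (2 * √(RR A β η θ τ)^3)
def k33 (A β η θ τ : ℝ) : ℝ := -RR33 β η θ τ / (2 * √(RR A β η θ τ)^3)
  + 3 * RR3 β η θ τ^2 / (4 * √(RR A β η θ τ)^5)

lemma k_harmonic (A β η θ τ : ℝ) (h0 : 0 < RR A β η θ τ) (hs : sin θ ≠ 0) (hh : sinh η ≠ 0) :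
    sin θ * (sinh η * k11 A β η θ τ + cosh η * k1 A β η θ τ)
      + sinh η * (sin θ * k22 A β η θ τ + cos θ * k2 A β η θ τ)
      + (sinh η / sin θ + sin θ / sinh η) * k33 A β η θ τ = 0 := by
  have hS : 0 < √(RR A β η θ τ) := Real.sqrt_pos.2 h0
  have hS2 : √(RR A β η θ τ)^2 = RR A β η θ τ := Real.sq_sqrt h0.le
  have i1 := RR_id1 A β η θ τ
  have i2 := RR_id2 A β η θ τ
  have e3 : RR3 β η θ τ = 2*β*sinh η*sin θ*sin τ := rfl
  have e33 : RR33 β η θ τ = 2*β*sinh η*sin θ*cos τ := rfl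
  unfold k11 k1 k22 k2 k33
  rw [e3, e33]
  rw [← hS2] at i1
  generalize √(RR A β η θ τ) = S at *
  generalize RR1 A β η θ τ = r1 at *
  generalize RR2 A β η θ τ = r2 at *
  generalize RR11 A β η θ τ = r11 at *
  generalize RR22 A β η θ τ = r22 at *
  generalize sinh η = y at *
  generalize sin θ = s at *
  field_simp
  linear_combination (6 * s * y) * i1 - 4 * S^2 * i2

lemma kcont {A β : ℝ} {U : Set ℝ} (hU : ∀ η ∈ U, ∀ z ∈ KK, 0 < RR A β η z.1 z.2) :
    ContinuousOn (fun w : ℝ × ℝ × ℝ => k0 A β w.1 w.2.1 w.2.2) (U ×ˢ KK) ∧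
    ContinuousOn (fun w : ℝ × ℝ × ℝ => k1 A β w.1 w.2.1 w.2.2) (U ×ˢ KK) ∧
    ContinuousOn (fun w : ℝ × ℝ × ℝ => k11 A β w.1 w.2.1 w.2.2) (U ×ˢ KK) ∧
    ContinuousOn (fun w : ℝ × ℝ × ℝ => k2 A β w.1 w.2.1 w.2.2) (U ×ˢ KK) ∧
    ContinuousOn (fun w : ℝ × ℝ × ℝ => k22 A β w.1 w.2.1 w.2.2) (U ×ˢ KK) := by
  have c0 := RR_cont A β
  have c1 := RR1_cont A β
  have c2 := RR2_cont A β
  have c11 := RR11_cont A β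
  have c22 := RR22_cont A β
  have hS : ∀ w ∈ U ×ˢ KK, 0 < √(RR A β w.1 w.2.1 w.2.2) := fun w hw =>
    Real.sqrt_pos.2 (hU w.1 hw.1 w.2 hw.2)
  unfold k0 k1 k11 k2 k22
  refine ⟨?_, ?_, ?_, ?_, ?_⟩
  · exact ContinuousOn.div (by fun_prop) (by fun_prop) (fun w hw => (hS w hw).ne')
  · exact ContinuousOn.div (by fun_prop) (by fun_prop)
      (fun w hw => by have := hS w hw; positivity)
  · exact ContinuousOn.add (ContinuousOn.div (by fun_prop) (by fun_prop)
      (fun w hw => by have := hS w hw; positivity)) (ContinuousOn.div (by fun_prop) (by fun_prop)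
      (fun w hw => by have := hS w hw; positivity))
  · exact ContinuousOn.div (by fun_prop) (by fun_prop)
      (fun w hw => by have := hS w hw; positivity)
  · exact ContinuousOn.add (ContinuousOn.div (by fun_prop) (by fun_prop)
      (fun w hw => by have := hS w hw; positivity)) (ContinuousOn.div (by fun_prop) (by fun_prop)
      (fun w hw => by have := hS w hw; positivity))

end PartC

section PartD

def gI (A β : ℝ) (m : ℕ) (f : ℝ → ℝ) (η : ℝ) : ℝ :=
  ∫ z in KK, f z.1 * cos (m * z.2) * sin z.1 * k0 A β η z.1 z.2
def gI1 (A β : ℝ) (m : ℕ) (f : ℝ → ℝ) (η : ℝ) : ℝ :=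
  ∫ z in KK, f z.1 * cos (m * z.2) * sin z.1 * k1 A β η z.1 z.2
def gI2 (A β : ℝ) (m : ℕ) (f : ℝ → ℝ) (η : ℝ) : ℝ :=
  ∫ z in KK, f z.1 * cos (m * z.2) * sin z.1 * k11 A β η z.1 z.2

lemma slice_cont {U : Set ℝ} {F : ℝ × ℝ × ℝ → ℝ} (hF : ContinuousOn F (U ×ˢ KK)) {η : ℝ} (hη : η ∈ U) :
    ContinuousOn (fun z => F (η, z)) KK :=
  hF.comp (f := fun z => (η, z)) (by fun_prop) (fun z hz => ⟨hη, hz⟩)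

lemma gI_hasDerivAt {A β : ℝ} {U : Set ℝ} (hUo : IsOpen U)
    (hU : ∀ η ∈ U, ∀ z ∈ KK, 0 < RR A β η z.1 z.2) (m : ℕ) {f : ℝ → ℝ} (hf : Continuous f)
    {η : ℝ} (hη : η ∈ U) : HasDerivAt (gI A β m f) (gI1 A β m f η) η := by
  obtain ⟨c0, c1, c11, c2, c22⟩ := kcont hU
  refine hasDerivAt_setIntegral_compact (U := U)
    (F := fun η z => f z.1 * cos (m * z.2) * sin z.1 * k0 A β η z.1 z.2)
    (F' := fun η z => f z.1 * cos (m * z.2) * sin z.1 * k1 A β η z.1 z.2)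
    KK_compact KK_meas hUo ?_ ?_ ?_ hη
  · intro x hx
    exact ContinuousOn.mul (by fun_prop) (slice_cont c0 hx)
  · exact ContinuousOn.mul (by fun_prop) c1
  · intro x hx z hz
    exact (hasDerivAt_inv_sqrt (RR_hasDerivAt1 A β x z.1 z.2) (hU x hx z hz)).const_mul _

lemma gI1_hasDerivAt {A β : ℝ} {U : Set ℝ} (hUo : IsOpen U)
    (hU : ∀ η ∈ U, ∀ z ∈ KK, 0 < RR A β η z.1 z.2) (m : ℕ) {f : ℝ → ℝ} (hf : Continuous f)
    {η : ℝ} (hη : η ∈ U) : HasDerivAt (gI1 A β m f) (gI2 A β m f η) η := by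
  obtain ⟨c0, c1, c11, c2, c22⟩ := kcont hU
  refine hasDerivAt_setIntegral_compact (U := U)
    (F := fun η z => f z.1 * cos (m * z.2) * sin z.1 * k1 A β η z.1 z.2)
    (F' := fun η z => f z.1 * cos (m * z.2) * sin z.1 * k11 A β η z.1 z.2)
    KK_compact KK_meas hUo ?_ ?_ ?_ hη
  · intro x hx
    exact ContinuousOn.mul (by fun_prop) (slice_cont c1 hx)
  · exact ContinuousOn.mul (by fun_prop) c11
  · intro x hx z hz
    exact (hasDerivAt_inv_sqrt' (RR_hasDerivAt1 A β x z.1 z.2) (RR_hasDerivAt11 A β x z.1 z.2)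
      (hU x hx z hz)).const_mul _

lemma KK_integral_symm {F : ℝ × ℝ → ℝ} (hF : ContinuousOn F KK) :
    ∫ z in KK, F z = ∫ τ in Set.Icc (-π) π, ∫ θ in Set.Icc 0 π, F (θ, τ) := by
  have h : Integrable F ((volume.restrict (Set.Icc 0 π)).prod (volume.restrict (Set.Icc (-π) π))) := by
    rw [Measure.prod_restrict]
    exact hF.integrableOn_compact KK_compact
  rw [← integral_prod_symm _ h, Measure.prod_restrict]
  rfl

lemma KK_integral {F : ℝ × ℝ → ℝ} (hF : ContinuousOn F KK) :
    ∫ z in KK, F z = ∫ θ in Set.Icc 0 π, ∫ τ in Set.Icc (-π) π, F (θ, τ) := by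
  have h : Integrable F ((volume.restrict (Set.Icc 0 π)).prod (volume.restrict (Set.Icc (-π) π))) := by
    rw [Measure.prod_restrict]
    exact hF.integrableOn_compact KK_compact
  rw [← integral_prod _ h, Measure.prod_restrict]
  rfl

lemma integral_Icc_deriv {a b : ℝ} (hab : a ≤ b) {F F' : ℝ → ℝ}
    (hd : ∀ x ∈ Set.Icc a b, HasDerivAt F (F' x) x) (hc : ContinuousOn F' (Set.Icc a b)) :
    ∫ x in Set.Icc a b, F' x = F b - F a := by
  rw [integral_Icc_eq_integral_Ioc, ← intervalIntegral.integral_of_le hab]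
  apply intervalIntegral.integral_eq_sub_of_hasDerivAt
  · rwa [Set.uIcc_of_le hab]
  · apply ContinuousOn.intervalIntegrable
    rwa [Set.uIcc_of_le hab]

lemma gI_ode {A β : ℝ} {U : Set ℝ}
    (hU : ∀ η ∈ U, ∀ z ∈ KK, 0 < RR A β η z.1 z.2) (m : ℕ) (N : ℝ) {f f1 f2 : ℝ → ℝ}
    (hf : ∀ θ, HasDerivAt f (f1 θ) θ) (hf1 : ∀ θ, HasDerivAt f1 (f2 θ) θ) (hf2 : Continuous f2)
    (ode : ∀ θ, sin θ^2 * f2 θ + sin θ * cos θ * f1 θ = (m^2 - N * sin θ^2) * f θ)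
    {η : ℝ} (hη : η ∈ U) (h0 : 0 < sinh η) :
    sinh η * gI2 A β m f η + cosh η * gI1 A β m f η
      = (N * sinh η + m^2 / sinh η) * gI A β m f η := by
  obtain ⟨c0, c1, c11, c2, c22⟩ := kcont hU
  replace c0 := slice_cont c0 hη
  replace c1 := slice_cont c1 hη
  replace c11 := slice_cont c11 hη
  replace c2 := slice_cont c2 hη
  replace c22 := slice_cont c22 hη
  simp only at c0 c1 c11 c2 c22
  have hfc : Continuous f := continuous_iff_continuousAt.2 fun θ => (hf θ).continuousAt
  have hf1c : Continuous f1 := continuous_iff_continuousAt.2 fun θ => (hf1 θ).continuousAt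
  -- the three integrands
  have i0 : ContinuousOn (fun z : ℝ × ℝ => f z.1 * cos (m * z.2) * sin z.1 * k0 A β η z.1 z.2) KK :=
    ContinuousOn.mul (by fun_prop) c0
  have i1 : ContinuousOn (fun z : ℝ × ℝ => f z.1 * cos (m * z.2) * sin z.1 * k1 A β η z.1 z.2) KK :=
    ContinuousOn.mul (by fun_prop) c1
  have i2 : ContinuousOn (fun z : ℝ × ℝ => f z.1 * cos (m * z.2) * sin z.1 * k11 A β η z.1 z.2) KK :=
    ContinuousOn.mul (by fun_prop) c11
  set E : ℝ × ℝ → ℝ := fun z =>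
    sinh η * (f z.1 * cos (m * z.2) * sin z.1 * k11 A β η z.1 z.2)
      + cosh η * (f z.1 * cos (m * z.2) * sin z.1 * k1 A β η z.1 z.2)
      - (N * sinh η + m^2 / sinh η) * (f z.1 * cos (m * z.2) * sin z.1 * k0 A β η z.1 z.2) with hE
  have hEc : ContinuousOn E KK := ((i2.const_mul _).add (i1.const_mul _)).sub (i0.const_mul _)
  have hEint : ∫ z in KK, E z = sinh η * gI2 A β m f η + cosh η * gI1 A β m f η
      - (N * sinh η + m^2 / sinh η) * gI A β m f η := by
    have j0 := i0.integrableOn_compact (μ := volume) KK_compact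
    have j1 := i1.integrableOn_compact (μ := volume) KK_compact
    have j2 := i2.integrableOn_compact (μ := volume) KK_compact
    have j12 : IntegrableOn (fun z : ℝ × ℝ => sinh η * (f z.1 * cos (m * z.2) * sin z.1 * k11 A β η z.1 z.2)
      + cosh η * (f z.1 * cos (m * z.2) * sin z.1 * k1 A β η z.1 z.2)) KK :=
      (j2.const_mul _).add (j1.const_mul _)
    rw [hE, integral_sub j12 (j0.const_mul _), integral_add (j2.const_mul _) (j1.const_mul _),
      integral_const_mul, integral_const_mul, integral_const_mul]
    rfl
  set A1 : ℝ × ℝ → ℝ := fun z => sinh η * cos (m * z.2) *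
    (cos z.1 * (f z.1 * k2 A β η z.1 z.2 - k0 A β η z.1 z.2 * f1 z.1)
      + sin z.1 * (f z.1 * k22 A β η z.1 z.2 - k0 A β η z.1 z.2 * f2 z.1)) with hA1
  have hA1c : ContinuousOn A1 KK := by
    refine ContinuousOn.mul (by fun_prop) (ContinuousOn.add (ContinuousOn.mul (by fun_prop) ?_)
      (ContinuousOn.mul (by fun_prop) ?_))
    · exact (ContinuousOn.mul (by fun_prop) c2).sub (c0.mul (by fun_prop))
    · exact (ContinuousOn.mul (by fun_prop) c22).sub (c0.mul (by fun_prop))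
  have hA1int : ∫ z in KK, A1 z = 0 := by
    rw [KK_integral_symm hA1c]
    refine (setIntegral_congr_fun (g := fun _ => (0:ℝ)) measurableSet_Icc ?_).trans (by simp)
    intro τ hτ
    simp only
    rw [integral_Icc_deriv (F := fun θ => sinh η * cos (m * τ) *
      (sin θ * (f θ * k2 A β η θ τ - k0 A β η θ τ * f1 θ))) pi_pos.le]
    · simp
    · intro θ hθ
      have hpos := hU η hη (θ, τ) ⟨hθ, hτ⟩
      have d0 := hasDerivAt_inv_sqrt (RR_hasDerivAt2 A β η θ τ) hpos
      have d2 := hasDerivAt_inv_sqrt' (R1 := fun θ => RR2 A β η θ τ) (RR_hasDerivAt2 A β η θ τ) (RR_hasDerivAt22 A β η θ τ) hpos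
      refine (((hasDerivAt_sin θ).fun_mul (((hf θ).fun_mul d2).fun_sub (d0.fun_mul (hf1 θ)))).const_mul
        (sinh η * cos (m * τ))).congr_deriv ?_
      simp only [hA1, k0, k2, k22]
      ring
    · exact hA1c.comp (f := fun θ => (θ, τ)) (by fun_prop) (fun θ hθ => ⟨hθ, hτ⟩)
  have hsum : ∫ z in KK, (E z + A1 z) = 0 := by
    have hEA : ContinuousOn (fun z => E z + A1 z) KK := hEc.add hA1c
    rw [KK_integral hEA, integral_Icc_eq_integral_Ioo]
    refine (setIntegral_congr_fun (g := fun _ => (0:ℝ)) measurableSet_Ioo ?_).trans (by simp)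
    intro θ hθ
    have hθ' : θ ∈ Set.Icc 0 π := ⟨hθ.1.le, hθ.2.le⟩
    have hs : 0 < sin θ := sin_pos_of_pos_of_lt_pi hθ.1 hθ.2
    simp only
    rw [integral_Icc_deriv (F := fun τ => - ((sinh η / sin θ + sin θ / sinh η) * f θ *
      (cos (m * τ) * k3 A β η θ τ + m * sin (m * τ) * k0 A β η θ τ)))
      (by linarith [pi_pos])]
    · simp [k3, k0, RR3, RR]
    · intro τ hτ
      have hpos := hU η hη (θ, τ) ⟨hθ', hτ⟩
      have d0 := hasDerivAt_inv_sqrt (RR_hasDerivAt3 A β η θ τ) hpos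
      have d3 := hasDerivAt_inv_sqrt' (R1 := fun τ => RR3 β η θ τ) (RR_hasDerivAt3 A β η θ τ) (RR_hasDerivAt33 β η θ τ) hpos
      have l : HasDerivAt (fun τ : ℝ => (m:ℝ) * τ) m τ := by
        simpa using (hasDerivAt_id τ).const_mul (m:ℝ)
      refine (((l.cos.fun_mul d3).fun_add ((l.sin.const_mul (m:ℝ)).fun_mul d0)).const_mul
        ((sinh η / sin θ + sin θ / sinh η) * f θ)).fun_neg.congr_deriv ?_
      have harm := k_harmonic A β η θ τ hpos hs.ne' h0.ne'
      have o := ode θ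
      have e33 : -RR33 β η θ τ / (2 * √(RR A β η θ τ)^3)
        + 3 * RR3 β η θ τ^2 / (4 * √(RR A β η θ τ)^5) = k33 A β η θ τ := rfl
      have e3 : -RR3 β η θ τ / (2 * √(RR A β η θ τ)^3) = k3 A β η θ τ := rfl
      have e0 : 1 / √(RR A β η θ τ) = k0 A β η θ τ := rfl
      rw [e33, e3, e0]
      simp only [hE, hA1]
      have o2 : sin θ * f2 θ + cos θ * f1 θ = m^2 * f θ / sin θ - N * sin θ * f θ := by
        field_simp
        linear_combination o
      have o3 : sin θ / sinh η * sinh η = sin θ := by field_simp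
      linear_combination (-f θ * cos (m * τ)) * harm + (sinh η * cos (m*τ) * k0 A β η θ τ) * o2
    · exact hEA.comp (f := fun τ => (θ, τ)) (by fun_prop) (fun τ hτ => ⟨hθ', hτ⟩)
  rw [integral_add (hEc.integrableOn_compact KK_compact) (hA1c.integrableOn_compact KK_compact),
    hA1int, hEint] at hsum
  linarith

end PartD

section PartE

lemma RR_factor (e b η θ τ : ℝ) :
    RR (cosh e * cos b) (sinh e * sin b) η θ τ
      = (cosh (η + e) - cos (θ + b)) * (cosh (η - e) - cos (θ - b))
        + 2 * sinh η * sinh e * sin θ * sin b * (1 - cos τ) := by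
  unfold RR
  rw [cosh_add, cosh_sub, cos_add, cos_sub]
  have h1 := Real.cosh_sq η
  have h1' := Real.cosh_sq e
  have h2 := Real.sin_sq_add_cos_sq θ
  have h3 := Real.sin_sq_add_cos_sq b
  generalize cosh η = x at *
  generalize sinh η = y at *
  generalize cos θ = c at *
  generalize sin θ = s at *
  generalize cosh e = x' at *
  generalize sinh e = y' at *
  generalize cos b = c' at *
  generalize sin b = s' at *
  grind

lemma RR_pos_nonneg {e b η θ : ℝ} (τ : ℝ) (he : 0 < e) (hb : b ∈ Set.Ioo 0 π) (hη : 0 ≤ η) (hne : η ≠ e)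
    (hθ : θ ∈ Set.Icc 0 π) : 0 < RR (cosh e * cos b) (sinh e * sin b) η θ τ := by
  rw [RR_factor]
  have h1 : 1 < cosh (η + e) := Real.one_lt_cosh.2 (by positivity)
  have h2 : 1 < cosh (η - e) := Real.one_lt_cosh.2 (sub_ne_zero.2 hne)
  have h3 := cos_le_one (θ + b)
  have h4 := cos_le_one (θ - b)
  have h5 := cos_le_one τ
  have h6 : 0 ≤ sinh η := Real.sinh_nonneg_iff.2 hη
  have h7 : 0 < sinh e := Real.sinh_pos_iff.2 he
  have h8 := sin_nonneg_of_mem_Icc hθ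
  have h9 := sin_pos_of_mem_Ioo hb
  have : 0 < (cosh (η + e) - cos (θ + b)) * (cosh (η - e) - cos (θ - b)) :=
    mul_pos (by linarith) (by linarith)
  have : 0 ≤ 2 * sinh η * sinh e * sin θ * sin b * (1 - cos τ) :=
    mul_nonneg (by positivity) (by linarith)
  linarith

lemma RR_neg (A β η θ τ : ℝ) : RR A β (-η) θ τ = RR A β η θ (τ + π) := by
  unfold RR
  rw [cosh_neg, sinh_neg, cos_add_pi]; ring

def UU (e : ℝ) : Set ℝ := {η | |η| ≠ e}
lemma UU_open (e : ℝ) : IsOpen (UU e) := isOpen_ne_fun continuous_abs continuous_const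

lemma UU_pos {e b : ℝ} (he : 0 < e) (hb : b ∈ Set.Ioo 0 π) :
    ∀ η ∈ UU e, ∀ z ∈ KK, 0 < RR (cosh e * cos b) (sinh e * sin b) η z.1 z.2 := by
  intro η hη z hz
  rcases le_total 0 η with h | h
  · exact RR_pos_nonneg _ he hb h (by rwa [UU, Set.mem_ofPred_eq, abs_of_nonneg h] at hη) hz.1
  · have := RR_neg (cosh e * cos b) (sinh e * sin b) (-η) z.1 z.2
    rw [neg_neg] at this
    rw [this]
    exact RR_pos_nonneg _ he hb (by linarith) (by rwa [UU, Set.mem_ofPred_eq, abs_of_nonpos h] at hη) hz.1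

/-- generic Legendre-type functions -/
def H0 (m : ℕ) (s c P0 : ℝ → ℝ) (x : ℝ) : ℝ := s x^m * P0 (c x)
def H1 (σ : ℝ) (m : ℕ) (s c P0 P1 : ℝ → ℝ) (x : ℝ) : ℝ :=
  m * s x^(m-1) * c x * P0 (c x) + σ * s x^(m+1) * P1 (c x)
def H2 (σ : ℝ) (m : ℕ) (s c P0 P1 P2 : ℝ → ℝ) (x : ℝ) : ℝ :=
  m * ((m-1:ℕ) * s x^(m-1-1) * c x) * c x * P0 (c x) + m * s x^(m-1) * (σ * s x) * P0 (c x)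
   + m * s x^(m-1) * c x * (P1 (c x) * (σ * s x))
   + σ * ((m+1) * s x^m * c x) * P1 (c x) + σ * s x^(m+1) * (P2 (c x) * (σ * s x))

lemma H0_hasDerivAt {σ : ℝ} {m : ℕ} {s c P0 P1 : ℝ → ℝ} {x : ℝ}
    (hs : HasDerivAt s (c x) x) (hc : HasDerivAt c (σ * s x) x) (h0 : HasDerivAt P0 (P1 (c x)) (c x)) :
    HasDerivAt (H0 m s c P0) (H1 σ m s c P0 P1 x) x := by
  unfold H0 H1
  refine ((hs.fun_pow m).fun_mul (h0.comp x hc)).congr_deriv ?_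
  simp only [Function.comp]; ring

lemma H1_hasDerivAt {σ : ℝ} {m : ℕ} {s c P0 P1 P2 : ℝ → ℝ} {x : ℝ}
    (hs : HasDerivAt s (c x) x) (hc : HasDerivAt c (σ * s x) x) (h0 : HasDerivAt P0 (P1 (c x)) (c x))
    (h1 : HasDerivAt P1 (P2 (c x)) (c x)) :
    HasDerivAt (H1 σ m s c P0 P1) (H2 σ m s c P0 P1 P2 x) x := by
  unfold H1 H2
  refine ((((((hs.fun_pow (m-1)).const_mul (m:ℝ)).fun_mul hc).fun_mul (h0.comp x hc))).fun_add
    (((hs.fun_pow (m+1)).const_mul σ).fun_mul (h1.comp x hc))).congr_deriv ?_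
  simp only [Function.comp, Nat.add_sub_cancel]; push_cast; ring

lemma H_ode {σ N : ℝ} {m : ℕ} {s c P0 P1 P2 : ℝ → ℝ} {x : ℝ} (hsc : c x^2 = 1 + σ * s x^2)
    (ho : (c x^2-1) * P2 (c x) + 2*(m+1)*(c x)*P1 (c x) - (N - m*(m+1)) * P0 (c x) = 0) :
    s x^2 * H2 σ m s c P0 P1 P2 x + s x * c x * H1 σ m s c P0 P1 x
      = (m^2 + σ * N * s x^2) * H0 m s c P0 x := by
  unfold H0 H1 H2
  generalize c x = c at *
  generalize s x = s at *
  generalize P0 c = p0 at *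
  generalize P1 c = p1 at *
  generalize P2 c = p2 at *
  have hp2 : σ * s^2 * p2 = (N - m*(m+1)) * p0 - 2*(m+1)*c*p1 := by
    have : σ * s^2 = c^2 - 1 := by linarith
    rw [this]; linarith
  rcases m with _ | _ | m
  · push_cast at *; linear_combination (σ * s^2) * hp2
  · push_cast at *; norm_num at *; linear_combination (σ * s^3) * hp2 + (s*p0)*hsc
  · have e1 : m + 1 + 1 - 1 = m + 1 := rfl
    have e2 : m + 1 - 1 = m := rfl
    rw [e1, e2]
    push_cast at *
    linear_combination (σ * s^(m+4)) * hp2 + ((m+2)^2 * s^(m+2)*p0)*hsc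

def WW (A β : ℝ) (m : ℕ) (f h h1 : ℝ → ℝ) (η : ℝ) : ℝ :=
  sinh η * (h1 η * gI A β m f η - h η * gI1 A β m f η)

lemma W_const {A β : ℝ} {U S : Set ℝ} (hUo : IsOpen U)
    (hU : ∀ η ∈ U, ∀ z ∈ KK, 0 < RR A β η z.1 z.2) (m : ℕ) (N : ℝ) {f f1 f2 h h1 h2 : ℝ → ℝ}
    (hf : ∀ θ, HasDerivAt f (f1 θ) θ) (hf1 : ∀ θ, HasDerivAt f1 (f2 θ) θ) (hf2 : Continuous f2)
    (ode : ∀ θ, sin θ^2 * f2 θ + sin θ * cos θ * f1 θ = (m^2 - N * sin θ^2) * f θ)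
    (hSo : IsOpen S) (hS : IsPreconnected S) (hSU : S ⊆ U) (hS0 : S ⊆ Set.Ioi 0)
    (hh : ∀ η ∈ S, HasDerivAt h (h1 η) η) (hh1 : ∀ η ∈ S, HasDerivAt h1 (h2 η) η)
    (ode' : ∀ η ∈ S, sinh η^2 * h2 η + sinh η * cosh η * h1 η = (m^2 + N * sinh η^2) * h η) :
    ∀ x ∈ S, ∀ y ∈ S, WW A β m f h h1 x = WW A β m f h h1 y := by
  have hfc : Continuous f := continuous_iff_continuousAt.2 fun θ => (hf θ).continuousAt
  have key : ∀ η ∈ S, HasDerivAt (WW A β m f h h1) 0 η := by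
    intro η hη
    have h0 : 0 < sinh η := Real.sinh_pos_iff.2 (hS0 hη)
    have o := gI_ode hU m N hf hf1 hf2 ode (hSU hη) h0
    have o' := ode' η hη
    refine ((hasDerivAt_sinh η).fun_mul (((hh1 η hη).fun_mul (gI_hasDerivAt hUo hU m hfc (hSU hη))).fun_sub
      ((hh η hη).fun_mul (gI1_hasDerivAt hUo hU m hfc (hSU hη))))).congr_deriv ?_
    have o2 : sinh η * h2 η + cosh η * h1 η = (N * sinh η + m^2/sinh η) * h η := by
      field_simp
      linear_combination o'
    linear_combination gI A β m f η * o2 - h η * o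
  intro x hx y hy
  exact hSo.is_const_of_deriv_eq_zero hS (fun η hη => (key η hη).differentiableAt.differentiableWithinAt)
    (fun η hη => (key η hη).deriv) hx hy

/-- inner region: W vanishes -/
lemma W_inner {A β e : ℝ} (he : 0 < e) (hU : ∀ η ∈ UU e, ∀ z ∈ KK, 0 < RR A β η z.1 z.2) (m : ℕ) (N : ℝ) {f f1 f2 h h1 h2 : ℝ → ℝ}
    (hf : ∀ θ, HasDerivAt f (f1 θ) θ) (hf1 : ∀ θ, HasDerivAt f1 (f2 θ) θ) (hf2 : Continuous f2)
    (ode : ∀ θ, sin θ^2 * f2 θ + sin θ * cos θ * f1 θ = (m^2 - N * sin θ^2) * f θ)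
    (hh : ∀ η, HasDerivAt h (h1 η) η) (hh1 : ∀ η, HasDerivAt h1 (h2 η) η)
    (ode' : ∀ η, sinh η^2 * h2 η + sinh η * cosh η * h1 η = (m^2 + N * sinh η^2) * h η) :
    ∀ x ∈ Set.Ioo 0 e, WW A β m f h h1 x = 0 := by
  have hfc : Continuous f := continuous_iff_continuousAt.2 fun θ => (hf θ).continuousAt
  have hc := W_const (S := Set.Ioo 0 e) (UU_open e) hU m N hf hf1 hf2 ode isOpen_Ioo isPreconnected_Ioo
    (fun x hx => by simp only [UU, Set.mem_ofPred_eq]; rw [abs_of_pos hx.1]; exact hx.2.ne) (fun x hx => hx.1)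
    (fun η _ => hh η) (fun η _ => hh1 η) (fun η _ => ode' η)
  intro x hx
  have h0U : (0:ℝ) ∈ UU e := by simp only [UU, Set.mem_ofPred_eq, abs_zero]; exact he.ne
  have cont : ContinuousAt (WW A β m f h h1) 0 := by
    unfold WW
    have := (gI_hasDerivAt (UU_open e) hU m hfc h0U).continuousAt
    have := (gI1_hasDerivAt (UU_open e) hU m hfc h0U).continuousAt
    have := (hh 0).continuousAt
    have := (hh1 0).continuousAt
    fun_prop
  have t1 : Filter.Tendsto (WW A β m f h h1) (nhdsWithin 0 (Set.Ioi 0)) (nhds 0) := by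
    have := cont.tendsto.mono_left (nhdsWithin_le_nhds (s := Set.Ioi 0))
    simpa [WW] using this
  have t2 : Filter.Tendsto (WW A β m f h h1) (nhdsWithin 0 (Set.Ioi 0)) (nhds (WW A β m f h h1 x)) := by
    refine tendsto_const_nhds.congr' ?_
    filter_upwards [Ioo_mem_nhdsGT he] with y hy
    exact hc x hx y hy
  exact tendsto_nhds_unique t2 t1

/-- concrete functions -/
def fF (n m : ℕ) : ℝ → ℝ := H0 m sin cos (LPd n m)
def fF1 (n m : ℕ) : ℝ → ℝ := H1 (-1) m sin cos (LPd n m) (LPd n (m+1))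
def fF2 (n m : ℕ) : ℝ → ℝ := H2 (-1) m sin cos (LPd n m) (LPd n (m+1)) (LPd n (m+2))
def pF (n m : ℕ) : ℝ → ℝ := H0 m sinh cosh (LPd n m)
def pF1 (n m : ℕ) : ℝ → ℝ := H1 1 m sinh cosh (LPd n m) (LPd n (m+1))
def pF2 (n m : ℕ) : ℝ → ℝ := H2 1 m sinh cosh (LPd n m) (LPd n (m+1)) (LPd n (m+2))
def qF (n m : ℕ) : ℝ → ℝ := H0 m sinh cosh (LQd n m)
def qF1 (n m : ℕ) : ℝ → ℝ := H1 1 m sinh cosh (LQd n m) (LQd n (m+1))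
def qF2 (n m : ℕ) : ℝ → ℝ := H2 1 m sinh cosh (LQd n m) (LQd n (m+1)) (LQd n (m+2))

lemma fF_d (n m : ℕ) (θ : ℝ) : HasDerivAt (fF n m) (fF1 n m θ) θ :=
  H0_hasDerivAt (hasDerivAt_sin θ) ((hasDerivAt_cos θ).congr_deriv (by ring)) (LPd_hasDerivAt n m _)
lemma fF1_d (n m : ℕ) (θ : ℝ) : HasDerivAt (fF1 n m) (fF2 n m θ) θ :=
  H1_hasDerivAt (hasDerivAt_sin θ) ((hasDerivAt_cos θ).congr_deriv (by ring)) (LPd_hasDerivAt n m _)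
   (LPd_hasDerivAt n (m+1) _)
lemma fF2_c (n m : ℕ) : Continuous (fF2 n m) := by
  have := LPd_continuous n m
  have := LPd_continuous n (m+1)
  have := LPd_continuous n (m+2)
  unfold fF2 H2; fun_prop
lemma fF_ode (n m : ℕ) (θ : ℝ) : sin θ^2 * fF2 n m θ + sin θ * cos θ * fF1 n m θ
    = (m^2 - (n*(n+1)) * sin θ^2) * fF n m θ := by
  have := H_ode (σ := -1) (m := m) (s := sin) (c := cos) (x := θ) (N := n*(n+1)) (P0 := LPd n m)
   (P1 := LPd n (m+1)) (P2 := LPd n (m+2)) (by linarith [sin_sq_add_cos_sq θ]) (LPd_ode n m _)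
  unfold fF fF1 fF2
  rw [this]; ring
lemma pF_d (n m : ℕ) (θ : ℝ) : HasDerivAt (pF n m) (pF1 n m θ) θ :=
  H0_hasDerivAt (hasDerivAt_sinh θ) ((hasDerivAt_cosh θ).congr_deriv (by ring)) (LPd_hasDerivAt n m _)
lemma pF1_d (n m : ℕ) (θ : ℝ) : HasDerivAt (pF1 n m) (pF2 n m θ) θ :=
  H1_hasDerivAt (hasDerivAt_sinh θ) ((hasDerivAt_cosh θ).congr_deriv (by ring)) (LPd_hasDerivAt n m _)
   (LPd_hasDerivAt n (m+1) _)
lemma pF_ode (n m : ℕ) (θ : ℝ) : sinh θ^2 * pF2 n m θ + sinh θ * cosh θ * pF1 n m θ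
    = (m^2 + (n*(n+1)) * sinh θ^2) * pF n m θ := by
  have := H_ode (σ := 1) (m := m) (s := sinh) (c := cosh) (x := θ) (N := n*(n+1)) (P0 := LPd n m)
   (P1 := LPd n (m+1)) (P2 := LPd n (m+2)) (by linarith [cosh_sq θ]) (LPd_ode n m _)
  unfold pF pF1 pF2
  rw [this]; ring
lemma qF_d (n m : ℕ) {θ : ℝ} (hθ : 0 < θ) : HasDerivAt (qF n m) (qF1 n m θ) θ :=
  H0_hasDerivAt (hasDerivAt_sinh θ) ((hasDerivAt_cosh θ).congr_deriv (by ring))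
   (LQd_hasDerivAt n m (one_lt_cosh.2 hθ.ne'))
lemma qF1_d (n m : ℕ) {θ : ℝ} (hθ : 0 < θ) : HasDerivAt (qF1 n m) (qF2 n m θ) θ :=
  H1_hasDerivAt (hasDerivAt_sinh θ) ((hasDerivAt_cosh θ).congr_deriv (by ring))
   (LQd_hasDerivAt n m (one_lt_cosh.2 hθ.ne')) (LQd_hasDerivAt n (m+1) (one_lt_cosh.2 hθ.ne'))
lemma qF_ode (n m : ℕ) {θ : ℝ} (hθ : 0 < θ) : sinh θ^2 * qF2 n m θ + sinh θ * cosh θ * qF1 n m θ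
    = (m^2 + (n*(n+1)) * sinh θ^2) * qF n m θ := by
  have := H_ode (σ := 1) (m := m) (s := sinh) (c := cosh) (x := θ) (N := n*(n+1)) (P0 := LQd n m)
   (P1 := LQd n (m+1)) (P2 := LQd n (m+2)) (by linarith [cosh_sq θ]) (LQd_ode n m _ (one_lt_cosh.2 hθ.ne'))
  unfold qF qF1 qF2
  rw [this]; ring

lemma pq_wronskian (n m : ℕ) (θ : ℝ) :
    sinh θ * (pF n m θ * qF1 n m θ - qF n m θ * pF1 n m θ) = LV n m (cosh θ) := by
  unfold pF qF1 qF pF1 H0 H1 LV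
  have : cosh θ^2 - 1 = sinh θ^2 := by linarith [cosh_sq θ]
  rw [this]; ring

end PartE

section PartF
open Filter Topology

lemma RR_lower (A β η θ τ : ℝ) (h : 4*(A^2+β^2) ≤ sinh η^2) : sinh η^2 / 4 ≤ RR A β η θ τ := by
  unfold RR
  have h1 := cosh_sq η
  have h2 := sin_sq_add_cos_sq θ
  have h3 := sin_sq_add_cos_sq τ
  have e1 : (cosh η * cos θ - A)^2 ≥ (cosh η * cos θ)^2/2 - A^2 := by nlinarith [sq_nonneg (cosh η * cos θ - 2*A)]
  have e2 : (sinh η * sin θ)^2 - 2*β*sinh η*sin θ*cos τ + β^2 ≥ (sinh η * sin θ)^2/2 - β^2 := by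
    nlinarith [sq_nonneg (sinh η * sin θ - 2 * β * cos τ), sq_nonneg (β * sin τ)]
  have e3 : (cosh η * cos θ)^2 + (sinh η * sin θ)^2 ≥ sinh η^2 := by
    have : (cosh η * cos θ)^2 + (sinh η * sin θ)^2 = sinh η^2 + cos θ^2 := by
      rw [mul_pow, mul_pow, h1]; linear_combination (sinh η^2) * h2
    rw [this]; nlinarith [sq_nonneg (cos θ)]
  linarith

lemma RR1_abs_le (A β η θ τ : ℝ) (h : 0 ≤ RR A β η θ τ) : |RR1 A β η θ τ| ≤ 2 * √(RR A β η θ τ) * cosh η := by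
  apply abs_le_of_sq_le_sq _ (by have := cosh_pos η; positivity)
  rw [mul_pow, mul_pow, Real.sq_sqrt h]
  have i := RR_id1 A β η θ τ
  have h1 := cosh_sq η
  have h2 := sin_sq_add_cos_sq θ
  have : 0 ≤ (sinh η^2 + sin θ^2)*(4*β^2*sin τ^2) := by positivity
  have : 4 * RR A β η θ τ * (sinh η^2 + sin θ^2) ≤ 4 * RR A β η θ τ * cosh η^2 := by
    apply mul_le_mul_of_nonneg_left _ (by positivity)
    nlinarith [sq_nonneg (cos θ)]
  nlinarith [sq_nonneg (RR2 A β η θ τ)]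

lemma k_bounds (A β η θ τ : ℝ) (h : 4*(A^2+β^2) ≤ sinh η^2) (h1 : 1 ≤ sinh η) :
    |k0 A β η θ τ| ≤ 2 / sinh η ∧ |k1 A β η θ τ| ≤ 8 / sinh η := by
  have hl := RR_lower A β η θ τ h
  have hp : 0 < RR A β η θ τ := lt_of_lt_of_le (by positivity) hl
  have hS : sinh η / 2 ≤ √(RR A β η θ τ) := by
    apply Real.le_sqrt_of_sq_le; rw [div_pow]; norm_num; exact hl
  have hS0 : 0 < √(RR A β η θ τ) := Real.sqrt_pos.2 hp
  constructor
  · rw [k0, abs_of_pos (by positivity), div_le_div_iff₀ hS0 (by linarith)]; linarith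
  · have hr := RR1_abs_le A β η θ τ hp.le
    rw [k1, abs_div, abs_neg, abs_of_pos (a := 2 * √(RR A β η θ τ)^3) (by positivity),
      div_le_div_iff₀ (by positivity) (by linarith)]
    have hw : cosh η ≤ 2 * sinh η := by
      apply abs_le_of_sq_le_sq' _ (by linarith) |>.2
      nlinarith [cosh_sq η]
    have hsq : √(RR A β η θ τ)^2 = RR A β η θ τ := Real.sq_sqrt hp.le
    calc |RR1 A β η θ τ| * sinh η ≤ (2 * √(RR A β η θ τ) * (2 * sinh η)) * sinh η := by
          apply mul_le_mul_of_nonneg_right _ (by linarith)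
          exact hr.trans (mul_le_mul_of_nonneg_left hw (by positivity))
      _ = 16 * √(RR A β η θ τ) * (sinh η^2/4) := by ring
      _ ≤ 16 * √(RR A β η θ τ) * RR A β η θ τ := by gcongr
      _ = 8 * (2 * √(RR A β η θ τ)^3) := by linear_combination (-16 * √(RR A β η θ τ)) * hsq

lemma sinh_tendsto : Tendsto sinh atTop atTop := by
  refine tendsto_atTop_mono' _ ?_ tendsto_id
  filter_upwards [eventually_ge_atTop 0] with x hx
  exact Real.self_le_sinh_iff.2 hx

lemma ev_large (A β : ℝ) : ∀ᶠ η in atTop, 4*(A^2+β^2) ≤ sinh η^2 ∧ 1 ≤ sinh η := by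
  filter_upwards [sinh_tendsto.eventually_ge_atTop (4*(A^2+β^2)), sinh_tendsto.eventually_ge_atTop 1] with η h1 h2
  exact ⟨by nlinarith, h2⟩

lemma gI_bound (A β : ℝ) (m : ℕ) {f : ℝ → ℝ} (hf : Continuous f) :
    ∃ C, 0 ≤ C ∧ ∀ᶠ η in atTop, |gI A β m f η| ≤ C / sinh η ∧ |gI1 A β m f η| ≤ C / sinh η := by
  obtain ⟨M, hM⟩ := KK_compact.exists_bound_of_continuousOn (f := fun z : ℝ × ℝ => f z.1 * cos (m * z.2) * sin z.1)
    (by fun_prop)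
  have hM0 : 0 ≤ M := (norm_nonneg _).trans (hM (0,0) ⟨⟨le_rfl, pi_pos.le⟩, ⟨by linarith [pi_pos], pi_pos.le⟩⟩)
  refine ⟨M * 8 * volume.real KK, by positivity, ?_⟩
  filter_upwards [ev_large A β] with η hη
  have hlt : volume KK < ⊤ := KK_compact.measure_lt_top
  constructor
  · have := norm_setIntegral_le_of_norm_le_const (C := M * (8 / sinh η)) hlt
      (f := fun z : ℝ × ℝ => f z.1 * cos (m * z.2) * sin z.1 * k0 A β η z.1 z.2) (fun z hz => by
        rw [norm_mul]
        refine mul_le_mul (hM z hz) ?_ (norm_nonneg _) hM0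
        refine (k_bounds A β η z.1 z.2 hη.1 hη.2).1.trans ?_
        have := hη.2
        gcongr; norm_num)
    refine this.trans (le_of_eq ?_); ring
  · have := norm_setIntegral_le_of_norm_le_const (C := M * (8 / sinh η)) hlt
      (f := fun z : ℝ × ℝ => f z.1 * cos (m * z.2) * sin z.1 * k1 A β η z.1 z.2) (fun z hz => by
        rw [norm_mul]
        refine mul_le_mul (hM z hz) ?_ (norm_nonneg _) hM0
        exact (k_bounds A β η z.1 z.2 hη.1 hη.2).2)
    refine this.trans (le_of_eq ?_); ring

lemma qF_bound (n m : ℕ) : ∃ C, ∀ᶠ η in atTop, |qF n m η| ≤ C / sinh η ∧ |qF1 n m η| ≤ C / sinh η := by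
  obtain ⟨C, hC⟩ := LQd_bound n m
  obtain ⟨D, hD⟩ := LQd_bound n (m+1)
  refine ⟨|C| + (m * |C| + |D|), ?_⟩
  filter_upwards [ev_large 1 1] with η hη
  have hy := hη.2
  have hw : sinh η ≤ cosh η := (sinh_lt_cosh η).le
  have h2 : 2 ≤ cosh η := by nlinarith [hη.1]
  have c := hC _ h2
  have d := hD _ h2
  have c0 : |LQd n m (cosh η)| * cosh η^(m+1) ≤ |C| := c.trans (le_abs_self _)
  have d0 : |LQd n (m+1) (cosh η)| * cosh η^(m+2) ≤ |D| := d.trans (le_abs_self _)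
  have a1 : |qF n m η| * sinh η ≤ |C| := by
    unfold qF H0
    rw [abs_mul, abs_of_nonneg (a := sinh η^m) (by positivity)]
    calc _ = |LQd n m (cosh η)| * sinh η^(m+1) := by ring
      _ ≤ |LQd n m (cosh η)| * cosh η^(m+1) := by gcongr
      _ ≤ _ := c0
  have a2 : |qF1 n m η| * sinh η ≤ m * |C| + |D| := by
    unfold qF1 H1
    have t1 : |m * sinh η^(m-1) * cosh η * LQd n m (cosh η)| * sinh η ≤ m * |C| := by
      rcases m with _ | m
      · simp
      · rw [abs_mul, abs_of_nonneg (by positivity)]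
        calc _ = ((m+1:ℕ):ℝ) * (|LQd n (m+1) (cosh η)| * (sinh η^(m+1) * cosh η)) := by simp only [Nat.add_sub_cancel]; ring
          _ ≤ ((m+1:ℕ):ℝ) * (|LQd n (m+1) (cosh η)| * (cosh η^(m+1) * cosh η)) := by gcongr
          _ = ((m+1:ℕ):ℝ) * (|LQd n (m+1) (cosh η)| * (cosh η^(m+1+1))) := by ring
          _ ≤ _ := by gcongr
    have t2 : |1 * sinh η^(m+1) * LQd n (m+1) (cosh η)| * sinh η ≤ |D| := by
      rw [abs_mul, abs_of_nonneg (by positivity)]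
      calc _ = |LQd n (m+1) (cosh η)| * sinh η^(m+2) := by ring
      _ ≤ |LQd n (m+1) (cosh η)| * cosh η^(m+2) := by gcongr
      _ ≤ _ := d0
    calc _ ≤ (|m * sinh η^(m-1) * cosh η * LQd n m (cosh η)| + |1 * sinh η^(m+1) * LQd n (m+1) (cosh η)|) * sinh η := by
          gcongr; exact abs_add_le _ _
      _ ≤ _ := by linarith
  have : 0 ≤ (m:ℝ) * |C| + |D| := by positivity
  constructor
  · rw [le_div_iff₀ (by linarith)]; linarith
  · rw [le_div_iff₀ (by linarith)]; linarith [abs_nonneg C]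

lemma Wq_tendsto (A β : ℝ) (n m : ℕ) {f : ℝ → ℝ} (hf : Continuous f) :
    Tendsto (WW A β m f (qF n m) (qF1 n m)) atTop (𝓝 0) := by
  obtain ⟨C, hC0, hC⟩ := gI_bound A β m hf
  obtain ⟨D, hD⟩ := qF_bound n m
  have lim : Tendsto (fun η => 2 * C * D / sinh η) atTop (𝓝 0) := sinh_tendsto.const_div_atTop _
  refine squeeze_zero_norm' ?_ lim
  filter_upwards [hC, hD, ev_large A β] with η h1 h2 h3
  have hy := h3.2
  unfold WW
  have b1 : |qF1 n m η * gI A β m f η| ≤ (D/sinh η) * (C/sinh η) := by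
    rw [abs_mul]; exact mul_le_mul h2.2 h1.1 (abs_nonneg _) ((abs_nonneg _).trans h2.2)
  have b2 : |qF n m η * gI1 A β m f η| ≤ (D/sinh η) * (C/sinh η) := by
    rw [abs_mul]; exact mul_le_mul h2.1 h1.2 (abs_nonneg _) ((abs_nonneg _).trans h2.1)
  rw [Real.norm_eq_abs, abs_mul, abs_of_nonneg (a := sinh η) (by linarith)]
  calc _ ≤ sinh η * ((D/sinh η) * (C/sinh η) + (D/sinh η) * (C/sinh η)) := by
        gcongr; exact (abs_sub _ _).trans (add_le_add b1 b2)
    _ = _ := by field_simp; ring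

lemma KK_sin : ∫ z in KK, sin z.1 = 4 * π := by
  rw [KK_integral (F := fun z => sin z.1) (by fun_prop)]
  simp only [integral_const, MeasurableSet.univ, measureReal_restrict_apply, Set.univ_inter, smul_eq_mul]
  rw [integral_const_mul, integral_Icc_eq_integral_Ioc, ← intervalIntegral.integral_of_le pi_pos.le, integral_sin,
    Real.volume_real_Icc_of_le (by linarith [pi_pos])]
  simp; ring

lemma k1_tendsto (A β θ τ : ℝ) : Tendsto (fun η => -sinh η * k1 A β η θ τ) atTop (𝓝 1) := by
  have hi : Tendsto (fun η => 1 / sinh η) atTop (𝓝 0) := sinh_tendsto.const_div_atTop _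
  have hr : Tendsto (fun η => cosh η / sinh η) atTop (𝓝 1) := by
    have h1 : Tendsto (fun η => √(1 + (1 / sinh η)^2)) atTop (𝓝 1) := by
      have := ((hi.pow 2).const_add 1).sqrt
      simpa using this
    refine h1.congr' ?_
    filter_upwards [ev_large A β] with η hη
    have := hη.2
    rw [Real.sqrt_eq_iff_mul_self_eq (by positivity) (by have := cosh_pos η; positivity)]
    field_simp
    linarith [cosh_sq η]
  have h2 := sin_sq_add_cos_sq θ
  have l0 : Tendsto (fun η => (cosh η / sinh η * cos θ - A * (1/sinh η))^2 + sin θ^2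
      - 2*β*(1/sinh η)*sin θ*cos τ + (β*(1/sinh η))^2) atTop (𝓝 1) := by
    have := ((((hr.mul_const (cos θ)).sub (hi.const_mul A)).pow 2).add_const (sin θ^2)).sub
      (((hi.const_mul (2*β)).mul_const (sin θ)).mul_const (cos τ)) |>.add ((hi.const_mul β).pow 2)
    convert this using 2
    linarith
  have l1 : Tendsto (fun η => 2*(cosh η / sinh η * cos θ - A * (1/sinh η))*cos θ + 2*(cosh η / sinh η)*(sin θ)^2
     - 2*β*(cosh η/sinh η)*sin θ*cos τ * (1/sinh η)) atTop (𝓝 2) := by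
    have := (((((hr.mul_const (cos θ)).sub (hi.const_mul A)).const_mul 2).mul_const (cos θ)).add
      ((hr.const_mul 2).mul_const (sin θ^2))).sub
      ((((hr.const_mul (2*β)).mul_const (sin θ)).mul_const (cos τ)).mul hi)
    convert this using 2
    linarith
  have l2 := l1.div ((l0.sqrt.pow 3).const_mul 2) (by norm_num)
  norm_num at l2
  refine l2.congr' ?_
  filter_upwards [ev_large A β] with η hη
  have hy := hη.2
  have e0 : (cosh η / sinh η * cos θ - A * (1/sinh η))^2 + sin θ^2
      - 2*β*(1/sinh η)*sin θ*cos τ + (β*(1/sinh η))^2 = RR A β η θ τ / sinh η^2 := by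
    unfold RR; field_simp
  have e1 : 2*(cosh η / sinh η * cos θ - A * (1/sinh η))*cos θ + 2*(cosh η / sinh η)*(sin θ)^2
     - 2*β*(cosh η/sinh η)*sin θ*cos τ * (1/sinh η) = RR1 A β η θ τ / sinh η^2 := by
    unfold RR1; field_simp
  have hp : 0 < RR A β η θ τ := lt_of_lt_of_le (by positivity) (RR_lower A β η θ τ hη.1)
  have hS0 : 0 < √(RR A β η θ τ) := Real.sqrt_pos.2 hp
  simp only [one_div] at e0 e1
  simp only [Pi.div_apply]
  rw [e0, e1, Real.sqrt_div hp.le, Real.sqrt_sq (by linarith), k1]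
  field_simp

lemma W1_tendsto {A β e : ℝ} (hU : ∀ η ∈ UU e, ∀ z ∈ KK, 0 < RR A β η z.1 z.2) :
    Tendsto (WW A β 0 (fun _ => 1) (fun _ => 1) (fun _ => 0)) atTop (𝓝 (4*π)) := by
  rw [← KK_sin]
  have h : ∀ η, WW A β 0 (fun _ => 1) (fun _ => 1) (fun _ => 0) η
      = ∫ z in KK, sin z.1 * (-sinh η * k1 A β η z.1 z.2) := by
    intro η
    unfold WW gI1
    rw [zero_mul, zero_sub, one_mul, mul_neg, ← neg_mul, ← integral_const_mul]
    congr 1; ext z; simp; ring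
  rw [show WW A β 0 (fun _ => 1) (fun _ => 1) (fun _ => 0) = _ from funext h]
  refine tendsto_integral_filter_of_dominated_convergence (fun _ => 8) ?_ ?_ ?_ ?_
  · filter_upwards [eventually_gt_atTop |e|] with η hη
    have hηU : η ∈ UU e := by
      have h0 : 0 < η := (abs_nonneg e).trans_lt hη
      simp only [UU, Set.mem_ofPred_eq]; rw [abs_of_pos h0]
      exact ((le_abs_self e).trans_lt hη).ne'
    obtain ⟨c0, c1, -⟩ := kcont hU
    have c1 := slice_cont c1 hηU
    apply ContinuousOn.aestronglyMeasurable _ KK_meas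
    exact ContinuousOn.mul (by fun_prop) (c1.const_mul _)
  · filter_upwards [ev_large A β] with η hη
    refine Eventually.of_forall fun z => ?_
    have b := (k_bounds A β η z.1 z.2 hη.1 hη.2).2
    have hy := hη.2
    rw [norm_mul, norm_mul, Real.norm_eq_abs, Real.norm_eq_abs, Real.norm_eq_abs, abs_neg, abs_of_nonneg (a := sinh η) (by linarith)]
    calc _ ≤ 1 * (sinh η * (8 / sinh η)) := by gcongr; exact abs_sin_le_one _
      _ = 8 := by field_simp
  · exact integrableOn_const (KK_compact.measure_lt_top).ne
  · refine Eventually.of_forall fun z => ?_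
    simpa using (k1_tendsto A β z.1 z.2).const_mul (sin z.1)

end PartF

section PartG
open Filter Topology

lemma cosh_ge_quad (x : ℝ) : 1 + x^2/2 ≤ cosh x := by
  have h := cosh_two_mul (x/2)
  have h2 := cosh_sq (x/2)
  have h3 : |x/2| ≤ |sinh (x/2)| := by rw [abs_sinh]; exact self_le_sinh_iff.2 (abs_nonneg _)
  have h4 : (x/2)^2 ≤ sinh (x/2)^2 := sq_le_sq.2 h3
  rw [show 2*(x/2) = x by ring] at h
  nlinarith

lemma RR_lower_near {e b : ℝ} (he : 0 < e) (hb : b ∈ Set.Ioo 0 π) :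
    ∃ c, 0 < c ∧ ∀ η ∈ Set.Icc (e/2) (e+1), ∀ z ∈ KK,
      c * ((η-e)^2 + (z.1-b)^2 + sin z.1 * z.2^2) ≤ RR (cosh e * cos b) (sinh e * sin b) η z.1 z.2 := by
  set c0 := cosh e - 1 with hc0
  have hc0p : 0 < c0 := by have := Real.one_lt_cosh.2 he.ne'; linarith
  set d0 := 2 * sinh (e/2) * sinh e * sin b with hd0
  have h7 : 0 < sinh e := Real.sinh_pos_iff.2 he
  have h7' : 0 < sinh (e/2) := Real.sinh_pos_iff.2 (by linarith)
  have h9 := sin_pos_of_mem_Ioo hb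
  have hd0p : 0 < d0 := by positivity
  have hpi : 2 / π^2 ≤ 1/2 := by
    rw [div_le_div_iff₀ (by positivity) (by norm_num)]
    nlinarith [pi_gt_three]
  have hpi0 : 0 < 2/π^2 := by positivity
  refine ⟨min c0 d0 * (2/π^2), by positivity, ?_⟩
  intro η hη z hz
  rw [RR_factor]
  have hs := sin_nonneg_of_mem_Icc hz.1
  have q1 := cosh_ge_quad (η - e)
  have q2 := cos_le_one_sub_mul_cos_sq (x := z.1 - b) (by
    have := hz.1.1; have := hz.1.2; have := hb.1; have := hb.2
    rw [abs_le]; constructor <;> linarith)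
  have q3 := cos_le_one_sub_mul_cos_sq (x := z.2) (abs_le.2 hz.2)
  have q4 : c0 ≤ cosh (η + e) - cos (z.1 + b) := by
    have := cos_le_one (z.1+b)
    have : cosh e ≤ cosh (η+e) := by
      rw [cosh_le_cosh, abs_of_pos he, abs_of_pos] <;> linarith [hη.1]
    linarith
  have q5 : (2/π^2) * ((η-e)^2 + (z.1-b)^2) ≤ cosh (η - e) - cos (z.1 - b) := by
    nlinarith [sq_nonneg (η - e)]
  have q6 : sinh (e/2) ≤ sinh η := sinh_le_sinh.2 hη.1
  have q7 : d0 ≤ 2 * sinh η * sinh e * sin b := by rw [hd0]; gcongr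
  have A1 : min c0 d0 * ((2/π^2) * ((η-e)^2 + (z.1-b)^2)) ≤ (cosh (η + e) - cos (z.1 + b)) * (cosh (η - e) - cos (z.1 - b)) :=
    mul_le_mul ((min_le_left _ _).trans q4) q5 (by positivity) (hc0p.le.trans q4)
  have A2 : min c0 d0 * ((2/π^2) * (sin z.1 * z.2^2)) ≤ 2 * sinh η * sinh e * sin z.1 * sin b * (1 - cos z.2) := by
    calc _ ≤ (2 * sinh η * sinh e * sin b) * (sin z.1 * (1 - cos z.2)) := by
          refine mul_le_mul ((min_le_right _ _).trans q7) ?_ (by positivity) (hd0p.le.trans q7)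
          nlinarith
      _ = _ := by ring
  linarith

lemma k1_abs_le {A β η θ τ : ℝ} (h : 0 < RR A β η θ τ) : |k1 A β η θ τ| ≤ cosh η / √(RR A β η θ τ)^2 := by
  have hr := RR1_abs_le A β η θ τ h.le
  have hS0 : 0 < √(RR A β η θ τ) := Real.sqrt_pos.2 h
  rw [k1, abs_div, abs_neg, abs_of_pos (a := 2 * √(RR A β η θ τ)^3) (by positivity),
    div_le_div_iff₀ (by positivity) (by positivity)]
  calc _ ≤ (2 * √(RR A β η θ τ) * cosh η) * √(RR A β η θ τ)^2 := by gcongr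
    _ = _ := by ring

def GG (A β e b : ℝ) (m : ℕ) (p p1 f : ℝ → ℝ) (η : ℝ) (z : ℝ × ℝ) : ℝ :=
  sinh η * (sin z.1 * (p1 η * f z.1 * cos (m * z.2) * k0 A β η z.1 z.2
    - (p η * f z.1 * cos (m * z.2) - p e * f b) * k1 A β η z.1 z.2))

lemma lip_bound {p p1 : ℝ → ℝ} (hp : ∀ x, HasDerivAt p (p1 x) x) (hp1 : Continuous p1) (l r : ℝ) :
    ∃ M, 0 ≤ M ∧ (∀ x ∈ Set.Icc l r, |p x| ≤ M ∧ |p1 x| ≤ M) ∧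
      ∀ x ∈ Set.Icc l r, ∀ y ∈ Set.Icc l r, |p x - p y| ≤ M * |x - y| := by
  have hpc : Continuous p := continuous_iff_continuousAt.2 fun θ => (hp θ).continuousAt
  obtain ⟨M1, h1⟩ := (isCompact_Icc (a := l) (b := r)).exists_bound_of_continuousOn hpc.continuousOn
  obtain ⟨M2, h2⟩ := (isCompact_Icc (a := l) (b := r)).exists_bound_of_continuousOn hp1.continuousOn
  have e1 : M1 ≤ |M1| + |M2| := (le_abs_self _).trans (by linarith [abs_nonneg M2])
  have e2 : M2 ≤ |M1| + |M2| := (le_abs_self _).trans (by linarith [abs_nonneg M1])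
  refine ⟨|M1| + |M2|, by positivity, fun x hx => ⟨(h1 x hx).trans e1, (h2 x hx).trans e2⟩, ?_⟩
  intro x hx y hy
  exact Convex.norm_image_sub_le_of_norm_hasDerivWithin_le (fun x _ => (hp x).hasDerivWithinAt)
    (fun x hx => (h2 x hx).trans e2) (convex_Icc l r) hy hx

set_option maxHeartbeats 1000000 in
lemma jump_bound {e b : ℝ} (he : 0 < e) (hb : b ∈ Set.Ioo 0 π) (m : ℕ) {p p1 f f1 : ℝ → ℝ}
    (hp : ∀ x, HasDerivAt p (p1 x) x) (hp1 : Continuous p1)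
    (hf : ∀ x, HasDerivAt f (f1 x) x) (hf1 : Continuous f1) :
    ∃ C, ∀ η ∈ Set.Icc (e/2) (e+1), ∀ z ∈ KK, z.1 ≠ b → z.2 ≠ 0 →
      |GG (cosh e * cos b) (sinh e * sin b) e b m p p1 f η z| ≤ C * ((√|z.1-b|)⁻¹ * (√|z.2|)⁻¹) := by
  obtain ⟨c, hc, hR⟩ := RR_lower_near he hb
  obtain ⟨M, hM, pM, pL⟩ := lip_bound hp hp1 (e/2) (e+1)
  obtain ⟨D, hD, fD, fL⟩ := lip_bound hf hf1 0 π
  set κ := 1/√c with hκ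
  have hκp : 0 < κ := by positivity
  have hκ2 : κ^2 * c = 1 := by rw [hκ, div_pow, Real.sq_sqrt hc.le]; field_simp
  set H := cosh (e+1) with hH
  have hHp : 0 < H := cosh_pos _
  set L := M * D * (m + 2) with hL
  refine ⟨H * (M * D + 3 * κ * L * H) * κ, ?_⟩
  clear_value κ H L
  intro η hη z hz hzb hz0
  have hl := hR η hη z hz
  set R := RR (cosh e * cos b) (sinh e * sin b) η z.1 z.2 with hRR
  have hs := sin_nonneg_of_mem_Icc hz.1
  have hs1 := sin_le_one z.1
  have hx0 : 0 < |z.1 - b| := abs_pos.2 (sub_ne_zero.2 hzb)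
  have ht0 : 0 < |z.2| := abs_pos.2 hz0
  have hRp : 0 < R := by
    refine lt_of_lt_of_le ?_ hl
    have : 0 < (z.1-b)^2 := by rw [← sq_abs]; positivity
    positivity
  set S := √R with hS
  have hSp : 0 < S := Real.sqrt_pos.2 hRp
  have hS2 : S^2 = R := Real.sq_sqrt hRp.le
  have hX : (η-e)^2 + (z.1-b)^2 + sin z.1 * z.2^2 ≤ (κ * S)^2 := by
    rw [mul_pow, hS2]
    calc _ = κ^2 * (c * ((η-e)^2 + (z.1-b)^2 + sin z.1 * z.2^2)) := by rw [← mul_assoc, hκ2, one_mul]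
      _ ≤ _ := by gcongr
  set δ := √(sin z.1) with hδ
  have hδ2 : δ^2 = sin z.1 := Real.sq_sqrt hs
  have hδ0 : 0 ≤ δ := Real.sqrt_nonneg _
  have hδ1 : δ ≤ 1 := Real.sqrt_le_one.2 hs1
  have hst : 0 ≤ sin z.1 * z.2^2 := by positivity
  have x1 : |η - e| ≤ κ * S := abs_le_of_sq_le_sq (by linarith [sq_nonneg (z.1-b)]) (by positivity)
  have x2 : |z.1 - b| ≤ κ * S := abs_le_of_sq_le_sq (by linarith [sq_nonneg (η-e)]) (by positivity)
  have x3 : δ * |z.2| ≤ κ * S := by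
    have : |δ * z.2| ≤ κ * S := by
      refine abs_le_of_sq_le_sq ?_ (by positivity)
      rw [mul_pow, hδ2]; linarith [sq_nonneg (η-e), sq_nonneg (z.1-b)]
    rwa [abs_mul, abs_of_nonneg hδ0] at this
  have hsX : sin z.1 * (|η - e| + |z.1 - b| + |z.2|) ≤ δ * (3 * (κ * S)) := by
    rw [← hδ2]
    have : δ * |η - e| ≤ κ * S := (mul_le_of_le_one_left (abs_nonneg _) hδ1).trans x1
    have : δ * |z.1 - b| ≤ κ * S := (mul_le_of_le_one_left (abs_nonneg _) hδ1).trans x2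
    calc _ = δ * (δ * |η - e| + δ * |z.1 - b| + δ * |z.2|) := by ring
      _ ≤ _ := by apply mul_le_mul_of_nonneg_left _ hδ0; linarith
  have heI : e ∈ Set.Icc (e/2) (e+1) := ⟨by linarith, by linarith⟩
  have hbI : b ∈ Set.Icc 0 π := ⟨hb.1.le, hb.2.le⟩
  have hcosm := abs_cos_le_one (m * z.2)
  have hdiff : |p η * f z.1 * cos (m * z.2) - p e * f b| ≤ L * (|η - e| + |z.1 - b| + |z.2|) := by
    have t1 : |(p η - p e) * (f z.1 * cos (m * z.2))| ≤ (M * |η - e|) * (D * 1) := by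
      rw [abs_mul, abs_mul]
      exact mul_le_mul (pL η hη e heI) (mul_le_mul (fD _ hz.1).1 hcosm (abs_nonneg _) hD) (by positivity) (by positivity)
    have t2 : |p e * ((f z.1 - f b) * cos (m * z.2))| ≤ M * ((D * |z.1 - b|) * 1) := by
      rw [abs_mul, abs_mul]
      exact mul_le_mul (pM e heI).1 (mul_le_mul (fL _ hz.1 b hbI) hcosm (abs_nonneg _) (by positivity)) (by positivity) hM
    have t3 : |p e * (f b * (cos (m * z.2) - 1))| ≤ M * (D * (m * |z.2|)) := by
      rw [abs_mul, abs_mul]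
      refine mul_le_mul (pM e heI).1 (mul_le_mul (fD b hbI).1 ?_ (abs_nonneg _) hD) (by positivity) hM
      have := abs_cos_sub_cos_le (m * z.2) 0
      simpa [abs_mul] using this
    have : p η * f z.1 * cos (m * z.2) - p e * f b = (p η - p e) * (f z.1 * cos (m * z.2))
      + p e * ((f z.1 - f b) * cos (m * z.2)) + p e * (f b * (cos (m * z.2) - 1)) := by ring
    rw [this]
    refine (abs_add_three _ _ _).trans ?_
    have hMD : 0 ≤ M * D := by positivity
    have m0 : (0:ℝ) ≤ m := by positivity
    have u1 : 0 ≤ M * D * ((m+1) * |η - e|) := by positivity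
    have u2 : 0 ≤ M * D * ((m+1) * |z.1 - b|) := by positivity
    have u3 : 0 ≤ M * D * (2 * |z.2|) := by positivity
    rw [hL]
    linarith
  have hch : cosh η ≤ H := by
    rw [hH, cosh_le_cosh, abs_of_pos (by linarith [hη.1]), abs_of_pos (by linarith)]; exact hη.2
  have hsh : |sinh η| ≤ H := by
    rw [abs_of_pos (sinh_pos_iff.2 (by linarith [hη.1]))]; exact (sinh_lt_cosh η).le.trans hch
  have hk1 : |k1 (cosh e * cos b) (sinh e * sin b) η z.1 z.2| ≤ H / S^2 :=
    (k1_abs_le hRp).trans (by gcongr)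
  have hk0 : |k0 (cosh e * cos b) (sinh e * sin b) η z.1 z.2| = 1 / S := by
    rw [k0, abs_of_pos (by positivity)]
  have hG : |GG (cosh e * cos b) (sinh e * sin b) e b m p p1 f η z| ≤ H * (M * D + 3 * κ * L * H) * (δ / S) := by
    unfold GG
    rw [abs_mul, mul_assoc H]
    refine mul_le_mul hsh ?_ (abs_nonneg _) hHp.le
    rw [abs_mul, abs_of_nonneg hs]
    have b1 : |p1 η * f z.1 * cos (m * z.2) * k0 (cosh e * cos b) (sinh e * sin b) η z.1 z.2| ≤ M * D * 1 * (1/S) := by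
      rw [abs_mul, abs_mul, abs_mul, hk0]
      gcongr
      · exact (pM η hη).2
      · exact (fD _ hz.1).1
    have b2 : |(p η * f z.1 * cos (m * z.2) - p e * f b) * k1 (cosh e * cos b) (sinh e * sin b) η z.1 z.2|
        ≤ (L * (|η - e| + |z.1 - b| + |z.2|)) * (H / S^2) := by
      rw [abs_mul]
      exact mul_le_mul hdiff hk1 (abs_nonneg _) ((abs_nonneg _).trans hdiff)
    have hsδ : sin z.1 ≤ δ := by rw [← hδ2]; nlinarith
    have hL0 : 0 ≤ L := by rw [hL]; positivity
    calc _ ≤ sin z.1 * (M * D * 1 * (1/S) + (L * (|η - e| + |z.1 - b| + |z.2|)) * (H / S^2)) := by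
          gcongr
          exact (abs_sub _ _).trans (add_le_add b1 b2)
      _ = sin z.1 * (M * D / S) + (sin z.1 * (|η - e| + |z.1 - b| + |z.2|)) * (L * H / S^2) := by ring
      _ ≤ δ * (M * D / S) + (δ * (3 * (κ * S))) * (L * H / S^2) := by gcongr
      _ = _ := by field_simp
  have hfin : δ / S ≤ κ * ((√|z.1-b|)⁻¹ * (√|z.2|)⁻¹) := by
    have r1 : 0 < √|z.1-b| := Real.sqrt_pos.2 hx0
    have r2 : 0 < √|z.2| := Real.sqrt_pos.2 ht0
    have : δ * √|z.1-b| * √|z.2| ≤ κ * S := by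
      refine (abs_le_of_sq_le_sq' ?_ (by positivity)).2
      rw [mul_pow, mul_pow, hδ2, Real.sq_sqrt hx0.le, Real.sq_sqrt ht0.le]
      refine le_trans ?_ hX
      have : |z.1-b| * |z.2| ≤ ((z.1-b)^2 + z.2^2)/2 := by
        nlinarith [sq_nonneg (|z.1-b| - |z.2|), sq_abs (z.1-b), sq_abs z.2]
      have h5 := mul_le_mul_of_nonneg_left this hs
      have h6 : sin z.1 * (z.1-b)^2 ≤ (z.1-b)^2 := mul_le_of_le_one_left (sq_nonneg _) hs1
      have h7 : sin z.1 * |z.1-b| * |z.2| ≤ (sin z.1 * (z.1-b)^2 + sin z.1 * z.2^2)/2 := by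
        calc _ = sin z.1 * (|z.1-b| * |z.2|) := by ring
          _ ≤ _ := h5
          _ = _ := by ring
      linarith [sq_nonneg (η-e), sq_nonneg (z.1-b)]
    rw [div_le_iff₀ hSp]
    calc δ = (δ * √|z.1-b| * √|z.2|) * ((√|z.1-b|)⁻¹ * (√|z.2|)⁻¹) := by field_simp
      _ ≤ (κ * S) * ((√|z.1-b|)⁻¹ * (√|z.2|)⁻¹) := by gcongr
      _ = _ := by ring
  refine hG.trans ?_
  have hL0 : 0 ≤ L := by rw [hL]; positivity
  have : 0 ≤ H * (M * D + 3 * κ * L * H) := by positivity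
  have h9 := mul_le_mul_of_nonneg_left hfin this
  exact h9.trans (le_of_eq (mul_assoc _ _ _).symm)

lemma inv_sqrt_abs_ii (r : ℝ) (hr : 0 ≤ r) : IntervalIntegrable (fun x => (√|x|)⁻¹) volume 0 r := by
  have := intervalIntegral.intervalIntegrable_rpow' (a := 0) (b := r) (r := -(1/2)) (by norm_num)
  refine this.congr ?_
  intro x hx
  rw [Set.uIoc_of_le hr] at hx
  simp only
  rw [rpow_neg hx.1.le, ← sqrt_eq_rpow, abs_of_pos hx.1]

lemma inv_sqrt_abs_int (b l r : ℝ) (hlb : l ≤ b) (hbr : b ≤ r) :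
    IntegrableOn (fun x => (√|x - b|)⁻¹) (Set.Icc l r) := by
  have h1 := inv_sqrt_abs_ii (r - b) (by linarith)
  have h2 := (IntervalIntegrable.iff_comp_neg (by simp)).1 (inv_sqrt_abs_ii (b - l) (by linarith))
  simp only [abs_neg] at h2
  have h3 := (h2.symm.trans (by simpa using h1)).comp_sub_right b
  rw [show -(b-l)+b = l by ring, show r - b + b = r by ring] at h3
  rw [integrableOn_Icc_iff_integrableOn_Ioc]
  exact (intervalIntegrable_iff_integrableOn_Ioc_of_le (by linarith)).1 h3

lemma bound_integrable {b : ℝ} (hb : b ∈ Set.Ioo 0 π) (C : ℝ) :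
    IntegrableOn (fun z : ℝ × ℝ => C * ((√|z.1-b|)⁻¹ * (√|z.2|)⁻¹)) KK := by
  have h1 := inv_sqrt_abs_int b 0 π hb.1.le hb.2.le
  have h2 := inv_sqrt_abs_int 0 (-π) π (by linarith [pi_pos]) pi_pos.le
  simp only [sub_zero] at h2
  have := (Integrable.mul_prod h1 h2).const_mul C
  rw [Measure.prod_restrict] at this
  exact this

lemma KK_ae (b : ℝ) : ∀ᵐ z : ℝ × ℝ ∂(volume.restrict KK), z ∈ KK ∧ z.1 ≠ b ∧ z.2 ≠ 0 := by
  have h1 : ∀ᵐ z : ℝ × ℝ, z.1 ≠ b :=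
    Measure.quasiMeasurePreserving_fst.ae (Measure.ae_ne volume b)
  have h2 : ∀ᵐ z : ℝ × ℝ, z.2 ≠ 0 :=
    Measure.quasiMeasurePreserving_snd.ae (Measure.ae_ne volume 0)
  filter_upwards [ae_restrict_mem KK_meas, ae_restrict_of_ae h1, ae_restrict_of_ae h2] with z a b c
  exact ⟨a, b, c⟩

lemma T_tendsto {e b : ℝ} (he : 0 < e) (hb : b ∈ Set.Ioo 0 π) (m : ℕ) {p p1 f f1 : ℝ → ℝ}
    (hp : ∀ x, HasDerivAt p (p1 x) x) (hp1 : Continuous p1)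
    (hf : ∀ x, HasDerivAt f (f1 x) x) (hf1 : Continuous f1) :
    ∃ L, Tendsto (fun η => WW (cosh e * cos b) (sinh e * sin b) m f p p1 η
      - p e * f b * WW (cosh e * cos b) (sinh e * sin b) 0 (fun _ => 1) (fun _ => 1) (fun _ => 0) η)
      (𝓝[≠] e) (𝓝 L) := by
  set A := cosh e * cos b with hA
  set β := sinh e * sin b with hβ
  have hU : ∀ η ∈ UU e, ∀ z ∈ KK, 0 < RR A β η z.1 z.2 := UU_pos he hb
  obtain ⟨C, hC⟩ := jump_bound he hb m hp hp1 hf hf1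
  have hfc : Continuous f := continuous_iff_continuousAt.2 fun θ => (hf θ).continuousAt
  have hpc : Continuous p := continuous_iff_continuousAt.2 fun θ => (hp θ).continuousAt
  obtain ⟨c0, c1, -⟩ := kcont hU
  have evI : ∀ᶠ η in 𝓝[≠] e, η ∈ Set.Icc (e/2) (e+1) ∧ η ∈ UU e := by
    have h1 : ∀ᶠ η in 𝓝[≠] e, η ∈ Set.Icc (e/2) (e+1) :=
      nhdsWithin_le_nhds (Icc_mem_nhds (by linarith) (by linarith))
    filter_upwards [h1, self_mem_nhdsWithin] with η h h'
    refine ⟨h, ?_⟩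
    simp only [UU, Set.mem_ofPred_eq]
    rw [abs_of_pos (by linarith [h.1])]
    exact h'
  have hGc : ∀ η ∈ UU e, ContinuousOn (GG A β e b m p p1 f η) KK := by
    intro η hη
    have c0 := slice_cont c0 hη
    have c1 := slice_cont c1 hη
    unfold GG
    refine ContinuousOn.mul (by fun_prop) (ContinuousOn.mul (by fun_prop) (ContinuousOn.sub ?_ ?_))
    · exact ContinuousOn.mul (by fun_prop) c0
    · exact ContinuousOn.mul (by fun_prop) c1
  have hT : ∀ η ∈ UU e, ∫ z in KK, GG A β e b m p p1 f η z = WW A β m f p p1 η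
      - p e * f b * WW A β 0 (fun _ => 1) (fun _ => 1) (fun _ => 0) η := by
    intro η hη
    have c0 := slice_cont c0 hη
    have c1 := slice_cont c1 hη
    have i0 : ContinuousOn (fun z : ℝ × ℝ => f z.1 * cos (m * z.2) * sin z.1 * k0 A β η z.1 z.2) KK :=
      ContinuousOn.mul (by fun_prop) c0
    have i1 : ContinuousOn (fun z : ℝ × ℝ => f z.1 * cos (m * z.2) * sin z.1 * k1 A β η z.1 z.2) KK :=
      ContinuousOn.mul (by fun_prop) c1
    have i2 : ContinuousOn (fun z : ℝ × ℝ => (1:ℝ) * cos ((0:ℕ) * z.2) * sin z.1 * k1 A β η z.1 z.2) KK :=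
      ContinuousOn.mul (by fun_prop) c1
    have j0 := i0.integrableOn_compact (μ := volume) KK_compact
    have j1 := i1.integrableOn_compact (μ := volume) KK_compact
    have j2 := i2.integrableOn_compact (μ := volume) KK_compact
    have e1 : ∀ z, GG A β e b m p p1 f η z =
       (sinh η * p1 η) * (f z.1 * cos (m * z.2) * sin z.1 * k0 A β η z.1 z.2)
       - (sinh η * p η) * (f z.1 * cos (m * z.2) * sin z.1 * k1 A β η z.1 z.2)
       + (sinh η * (p e * f b)) * ((1:ℝ) * cos ((0:ℕ) * z.2) * sin z.1 * k1 A β η z.1 z.2) := by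
      intro z; unfold GG; simp; ring
    simp_rw [e1]
    have j12 : IntegrableOn (fun z : ℝ × ℝ => (sinh η * p1 η) * (f z.1 * cos (m * z.2) * sin z.1 * k0 A β η z.1 z.2)
       - (sinh η * p η) * (f z.1 * cos (m * z.2) * sin z.1 * k1 A β η z.1 z.2)) KK :=
      (j0.const_mul _).sub (j1.const_mul _)
    rw [integral_add j12 (j2.const_mul _), integral_sub (j0.const_mul _) (j1.const_mul _),
      integral_const_mul, integral_const_mul, integral_const_mul]
    unfold WW gI gI1
    ring
  refine ⟨∫ z in KK, GG A β e b m p p1 f e z, ?_⟩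
  have main : Tendsto (fun η => ∫ z in KK, GG A β e b m p p1 f η z) (𝓝[≠] e)
      (𝓝 (∫ z in KK, GG A β e b m p p1 f e z)) := by
    refine tendsto_integral_filter_of_dominated_convergence
      (fun z : ℝ × ℝ => C * ((√|z.1-b|)⁻¹ * (√|z.2|)⁻¹)) ?_ ?_ (bound_integrable hb C) ?_
    · filter_upwards [evI] with η hη
      exact (hGc η hη.2).aestronglyMeasurable KK_meas
    · filter_upwards [evI] with η hη
      filter_upwards [KK_ae b] with z hz
      exact hC η hη.1 z hz.1 hz.2.1 hz.2.2
    · filter_upwards [KK_ae b] with z hz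
      have hpos : 0 < RR A β e z.1 z.2 := by
        obtain ⟨c, hc, hR⟩ := RR_lower_near he hb
        refine lt_of_lt_of_le ?_ (hR e ⟨by linarith, by linarith⟩ z hz.1)
        have h1 : 0 < (z.1-b)^2 := by have := sub_ne_zero.2 hz.2.1; positivity
        have h2 := sin_nonneg_of_mem_Icc hz.1.1
        positivity
      have hSp : 0 < √(RR A β e z.1 z.2) := Real.sqrt_pos.2 hpos
      have r0 : Continuous (fun η => RR A β η z.1 z.2) := by unfold RR; fun_prop
      have r1 : Continuous (fun η => RR1 A β η z.1 z.2) := by unfold RR1; fun_prop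
      have k0c : ContinuousAt (fun η => k0 A β η z.1 z.2) e := by
        unfold k0
        exact ContinuousAt.div (by fun_prop) (by fun_prop) hSp.ne'
      have k1c : ContinuousAt (fun η => k1 A β η z.1 z.2) e := by
        unfold k1
        exact ContinuousAt.div (by fun_prop) (by fun_prop) (by positivity)
      have : ContinuousAt (fun η => GG A β e b m p p1 f η z) e := by
        unfold GG; fun_prop
      exact this.tendsto.mono_left nhdsWithin_le_nhds
  refine main.congr' ?_
  filter_upwards [evI] with η hη
  exact hT η hη.2

end PartG

section PartH
open Filter Topology

lemma const_limit {F : ℝ → ℝ} {e L : ℝ} (hc : ∀ x ∈ Set.Ioi e, ∀ y ∈ Set.Ioi e, F x = F y)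
    (hl : Tendsto F atTop (𝓝 L)) : ∀ x ∈ Set.Ioi e, F x = L := by
  intro x hx
  refine tendsto_nhds_unique (tendsto_const_nhds.congr' ?_) hl
  filter_upwards [eventually_gt_atTop e] with y hy
  exact hc x hx y hy

lemma gI1_value {e b η : ℝ} (he : 0 < e) (hb : b ∈ Set.Ioo 0 π) (n m : ℕ) (hm : m ≤ n) (hη : e < η) :
    gI1 (cosh e * cos b) (sinh e * sin b) m (fF n m) η * (-1)^m * ((n+m).factorial : ℝ)
      = 4 * π * pF n m e * fF n m b * qF1 n m η * ((n-m).factorial : ℝ) := by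
  obtain ⟨L, hT⟩ := T_tendsto he hb m (pF_d n m)
    (continuous_iff_continuousAt.2 fun θ => (pF1_d n m θ).continuousAt) (fF_d n m)
    (continuous_iff_continuousAt.2 fun θ => (fF1_d n m θ).continuousAt)
  have hU := UU_pos he hb
  set A := cosh e * cos b with hA
  set β := sinh e * sin b with hβ
  have hfc : Continuous (fF n m) := continuous_iff_continuousAt.2 fun θ => (fF_d n m θ).continuousAt
  have hIU : Set.Ioi e ⊆ UU e := fun x hx => by
    simp only [UU, Set.mem_ofPred_eq]; rw [abs_of_pos (he.trans hx)]; exact ne_of_gt hx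
  have hI0 : Set.Ioi e ⊆ Set.Ioi 0 := fun x hx => he.trans hx
  have d1 : ∀ θ, HasDerivAt (fun _ : ℝ => (1:ℝ)) ((fun _ => 0 : ℝ → ℝ) θ) θ := fun θ => hasDerivAt_const _ _
  have d0 : ∀ θ, HasDerivAt (fun _ : ℝ => (0:ℝ)) ((fun _ => 0 : ℝ → ℝ) θ) θ := fun θ => hasDerivAt_const _ _
  have Wp_in := W_inner he hU m (n*(n+1)) (fF_d n m) (fF1_d n m) (fF2_c n m) (fF_ode n m)
    (pF_d n m) (pF1_d n m) (pF_ode n m)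
  have W1_in := W_inner he hU 0 0 d1 d0 continuous_const (by simp) d1 d0 (by simp)
  have Wp_out := W_const (UU_open e) hU m (n*(n+1)) (fF_d n m) (fF1_d n m) (fF2_c n m) (fF_ode n m)
    isOpen_Ioi isPreconnected_Ioi hIU hI0
    (fun x _ => pF_d n m x) (fun x _ => pF1_d n m x) (fun x _ => pF_ode n m x)
  have Wq_out := const_limit (W_const (UU_open e) hU m (n*(n+1)) (fF_d n m) (fF1_d n m) (fF2_c n m) (fF_ode n m)
    isOpen_Ioi isPreconnected_Ioi hIU hI0
    (fun x hx => qF_d n m (hI0 hx)) (fun x hx => qF1_d n m (hI0 hx)) (fun x hx => qF_ode n m (hI0 hx)))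
    (Wq_tendsto A β n m hfc)
  have W1_out := const_limit (W_const (UU_open e) hU 0 0 d1 d0 continuous_const (by simp)
    isOpen_Ioi isPreconnected_Ioi hIU hI0 (fun x _ => d1 x) (fun x _ => d0 x) (by simp))
    (W1_tendsto hU)
  have hL0 : L = 0 := by
    refine tendsto_nhds_unique (hT.mono_left (nhdsWithin_mono e (s := Set.Iio e) (fun x hx => ne_of_lt hx))) ?_
    refine tendsto_const_nhds.congr' ?_
    filter_upwards [Ioo_mem_nhdsLT he] with x hx
    rw [Wp_in x hx, W1_in x hx]; simp
  have hR : WW A β m (fF n m) (pF n m) (pF1 n m) η - pF n m e * fF n m b * (4*π) = L := by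
    refine tendsto_nhds_unique (tendsto_const_nhds.congr' ?_)
      (hT.mono_left (nhdsWithin_mono e (s := Set.Ioi e) (fun x hx => ne_of_gt hx)))
    filter_upwards [self_mem_nhdsWithin] with x hx
    rw [Wp_out η hη x hx, W1_out x hx]
  have hq := Wq_out η hη
  have hw := pq_wronskian n m η
  have hv := LV_eq n m hm (one_lt_cosh.2 (he.trans hη).ne')
  rw [hL0] at hR
  unfold WW at hR hq
  rw [← hw] at hv
  linear_combination ((n-m).factorial * qF1 n m η : ℝ) * hR - ((n-m).factorial * pF1 n m η : ℝ) * hq + gI1 A β m (fF n m) η * hv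

end PartH

section PartI
open Filter Topology

lemma RR_pos_all {e b η : ℝ} (he : 0 < e) (hη : e < η) (θ τ : ℝ) :
    0 < RR (cosh e * cos b) (sinh e * sin b) η θ τ := by
  have h1 : 1 < cosh (η + e) := Real.one_lt_cosh.2 (by linarith)
  have h2 : 1 < cosh (η - e) := Real.one_lt_cosh.2 (by linarith)
  have X : 0 < (cosh (η + e) - cos (θ + b)) * (cosh (η - e) - cos (θ - b)) :=
    mul_pos (by linarith [cos_le_one (θ + b)]) (by linarith [cos_le_one (θ - b)])
  have Y : 0 < (cosh (η + e) - cos (θ - b)) * (cosh (η - e) - cos (θ + b)) :=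
    mul_pos (by linarith [cos_le_one (θ - b)]) (by linarith [cos_le_one (θ + b)])
  have key : RR (cosh e * cos b) (sinh e * sin b) η θ τ
     = (1 + cos τ)/2 * ((cosh (η + e) - cos (θ + b)) * (cosh (η - e) - cos (θ - b)))
      + (1 - cos τ)/2 * ((cosh (η + e) - cos (θ - b)) * (cosh (η - e) - cos (θ + b))) := by
    rw [RR_factor]
    rw [cosh_add, cosh_sub, cos_add, cos_sub]; ring
  rw [key]
  have c1 := cos_le_one τ
  have c2 := neg_one_le_cos τ
  rcases lt_or_ge (cos τ) 1 with h | h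
  · have := mul_nonneg (show 0 ≤ (1 + cos τ)/2 by linarith) X.le
    have := mul_pos (show 0 < (1 - cos τ)/2 by linarith) Y
    linarith
  · have := mul_pos (show 0 < (1 + cos τ)/2 by linarith) X
    have := mul_nonneg (show 0 ≤ (1 - cos τ)/2 by linarith) Y.le
    linarith

lemma prolate_hasDerivAt (a u s t : ℝ) (hu : 1 < u) :
    HasDerivAt (fun w => prolate a w s t) ((WithLp.equiv 2 (Fin 3 → ℝ)).symm
     ![a * (u / √(u^2-1)) * √(1-s^2) * cos t, a * (u / √(u^2-1)) * √(1-s^2) * sin t, a * s]) u := by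
  have hp : 0 < u^2 - 1 := by nlinarith
  have hs : HasDerivAt (fun w : ℝ => √(w^2-1)) (u/√(u^2-1)) u := by
    have h1 : HasDerivAt (fun w : ℝ => w^2 - 1) (2*u) u := by
      simpa using (hasDerivAt_pow 2 u).sub_const 1
    refine (h1.sqrt hp.ne').congr_deriv ?_
    field_simp
  have h : HasDerivAt (fun w => ![a * √(w^2-1) * √(1-s^2) * cos t, a * √(w^2-1) * √(1-s^2) * sin t, a * w * s])
     ![a * (u / √(u^2-1)) * √(1-s^2) * cos t, a * (u / √(u^2-1)) * √(1-s^2) * sin t, a * s] u := by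
    rw [hasDerivAt_pi]
    intro i
    fin_cases i
    · exact ((hs.const_mul a).mul_const _).mul_const _
    · exact ((hs.const_mul a).mul_const _).mul_const _
    · simpa using ((hasDerivAt_id u).const_mul a).mul_const s
  exact ((EuclideanSpace.equiv (Fin 3) ℝ).symm : (Fin 3 → ℝ) →L[ℝ] EuclideanSpace ℝ (Fin 3)).hasFDerivAt.comp_hasDerivAt u h

lemma prolate_sub_normsq {a e b η θ φ t : ℝ} (he : 0 ≤ e) (hη : 0 ≤ η) (hb : b ∈ Set.Icc 0 π) (hθ : θ ∈ Set.Icc 0 π) :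
    ‖prolate a (cosh e) (cos b) φ - prolate a (cosh η) (cos θ) t‖^2
      = a^2 * RR (cosh e * cos b) (sinh e * sin b) η θ (t - φ) := by
  have e1 : √(cosh e^2-1) = sinh e := by
    rw [show cosh e^2 - 1 = sinh e^2 by linarith [cosh_sq e], sqrt_sq (sinh_nonneg_iff.2 he)]
  have e2 : √(cosh η^2-1) = sinh η := by
    rw [show cosh η^2 - 1 = sinh η^2 by linarith [cosh_sq η], sqrt_sq (sinh_nonneg_iff.2 hη)]
  have e3 : √(1 - cos b^2) = sin b := by
    rw [show 1 - cos b^2 = sin b^2 by linarith [sin_sq_add_cos_sq b], sqrt_sq (sin_nonneg_of_mem_Icc hb)]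
  have e4 : √(1 - cos θ^2) = sin θ := by
    rw [show 1 - cos θ^2 = sin θ^2 by linarith [sin_sq_add_cos_sq θ], sqrt_sq (sin_nonneg_of_mem_Icc hθ)]
  rw [EuclideanSpace.norm_sq_eq, Fin.sum_univ_three]
  simp only [prolate, e1, e2, e3, e4, RR, cos_sub]
  simp
  have h1 := sin_sq_add_cos_sq t
  have h2 := sin_sq_add_cos_sq φ
  linear_combination (a^2 * sinh η^2 * sin θ^2) * h1 + (a^2 * sinh e^2 * sin b^2) * h2

lemma kernel_eq {a e b η θ φ t : ℝ} (ha : 0 < a) (he : 0 < e) (hη : e < η) (hb : b ∈ Set.Icc 0 π) (hθ : θ ∈ Set.Icc 0 π) :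
    (inner ℝ (unitNormalP a (cosh η) (cos θ) t) (prolate a (cosh e) (cos b) φ - prolate a (cosh η) (cos θ) t) : ℝ) /
        (4 * Real.pi * ‖prolate a (cosh e) (cos b) φ - prolate a (cosh η) (cos θ) t‖ ^ 3) * areaElemP a (cosh η) (cos θ)
      = sinh η / (4 * π) * k1 (cosh e * cos b) (sinh e * sin b) η θ (t - φ) := by
  have hη0 : 0 < η := he.trans hη
  have hsh : 0 < sinh η := sinh_pos_iff.2 hη0
  have e1 : √(cosh e^2-1) = sinh e := by
    rw [show cosh e^2 - 1 = sinh e^2 by linarith [cosh_sq e], sqrt_sq (sinh_nonneg_iff.2 he.le)]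
  have e2 : √(cosh η^2-1) = sinh η := by
    rw [show cosh η^2 - 1 = sinh η^2 by linarith [cosh_sq η], sqrt_sq hsh.le]
  have e3 : √(1 - cos b^2) = sin b := by
    rw [show 1 - cos b^2 = sin b^2 by linarith [sin_sq_add_cos_sq b], sqrt_sq (sin_nonneg_of_mem_Icc hb)]
  have e4 : √(1 - cos θ^2) = sin θ := by
    rw [show 1 - cos θ^2 = sin θ^2 by linarith [sin_sq_add_cos_sq θ], sqrt_sq (sin_nonneg_of_mem_Icc hθ)]
  have hd := (prolate_hasDerivAt a (cosh η) (cos θ) t (one_lt_cosh.2 hη0.ne')).deriv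
  have hR := RR_pos_all (b := b) he hη θ (t - φ)
  have hn2 := prolate_sub_normsq (a := a) (φ := φ) (t := t) he.le hη0.le hb hθ
  have hn : ‖prolate a (cosh e) (cos b) φ - prolate a (cosh η) (cos θ) t‖
      = a * √(RR (cosh e * cos b) (sinh e * sin b) η θ (t - φ)) := by
    rw [← sqrt_sq (norm_nonneg _), hn2, sqrt_mul (by positivity), sqrt_sq ha.le]
  have hv : 0 < cosh η^2 - cos θ^2 := by
    have := cosh_sq η; have := sin_sq_add_cos_sq θ; nlinarith [sq_nonneg (sin θ)]
  have hdn : ‖deriv (fun w => prolate a w (cos θ) t) (cosh η)‖ = a * √(cosh η^2 - cos θ^2) / sinh η := by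
    rw [← sqrt_sq (norm_nonneg _), ← sqrt_sq (show 0 ≤ a * √(cosh η^2 - cos θ^2) / sinh η by positivity)]
    congr 1
    rw [hd, EuclideanSpace.norm_sq_eq, Fin.sum_univ_three, e2, e4]
    simp
    simp only [mul_pow, div_pow, sq_abs, sq_sqrt hv.le]
    field_simp
    have h1 := sin_sq_add_cos_sq t
    have h2 := sin_sq_add_cos_sq θ
    have h3 := cosh_sq η
    grind
  have hin : (inner ℝ (deriv (fun w => prolate a w (cos θ) t) (cosh η)) (prolate a (cosh e) (cos b) φ - prolate a (cosh η) (cos θ) t) : ℝ)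
      = - a^2 * RR1 (cosh e * cos b) (sinh e * sin b) η θ (t - φ) / (2 * sinh η) := by
    rw [hd, PiLp.inner_apply, Fin.sum_univ_three]
    simp only [prolate, e1, e2, e3, e4, RR1, cos_sub]
    simp
    field_simp
    have h1 := sin_sq_add_cos_sq t
    grind
  unfold unitNormalP areaElemP
  rw [inner_smul_left, hin, hn, hdn, e2]
  have hS0 := Real.sqrt_pos.2 hR
  have hV0 := Real.sqrt_pos.2 hv
  unfold k1
  simp
  field_simp
  try ring

end PartI

section PartJ
open Filter Topology

def hJ (A β : ℝ) (n m : ℕ) (η τ : ℝ) : ℝ := ∫ θ in (0:ℝ)..π, fF n m θ * sin θ * k1 A β η θ τ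

lemma fF_cont (n m : ℕ) : Continuous (fF n m) :=
  continuous_iff_continuousAt.2 fun θ => (fF_d n m θ).continuousAt

lemma k1_cont {e b η : ℝ} (he : 0 < e) (hη : e < η) :
    Continuous (fun z : ℝ × ℝ => k1 (cosh e * cos b) (sinh e * sin b) η z.1 z.2) := by
  unfold k1
  refine Continuous.div ?_ ?_ ?_
  · unfold RR1; fun_prop
  · unfold RR; fun_prop
  · intro z
    have := Real.sqrt_pos.2 (RR_pos_all (b := b) he hη z.1 z.2)
    positivity

lemma hJ_cont {e b η : ℝ} (he : 0 < e) (hη : e < η) (n m : ℕ) :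
    Continuous (hJ (cosh e * cos b) (sinh e * sin b) n m η) := by
  unfold hJ
  apply intervalIntegral.continuous_parametric_intervalIntegral_of_continuous'
  have h1 := fF_cont n m
  have h2 := (k1_cont (b := b) he hη).comp (continuous_swap (X := ℝ) (Y := ℝ))
  simp only [Function.comp_def, Prod.swap] at h2
  simp only [Function.uncurry_def]
  fun_prop

lemma hJ_even (A β : ℝ) (n m : ℕ) (η τ : ℝ) : hJ A β n m η (-τ) = hJ A β n m η τ := by
  simp [hJ, k1, RR, RR1]

lemma hJ_per (A β : ℝ) (n m : ℕ) (η τ : ℝ) : hJ A β n m η (τ + 2 * π) = hJ A β n m η τ := by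
  simp [hJ, k1, RR, RR1]

lemma ferrersP_cos (n m : ℕ) {θ : ℝ} (hθ : θ ∈ Set.Icc 0 π) : ferrersP n m (cos θ) = fF n m θ := by
  have e4 : √(1 - cos θ^2) = sin θ := by
    rw [show 1 - cos θ^2 = sin θ^2 by linarith [sin_sq_add_cos_sq θ], sqrt_sq (sin_nonneg_of_mem_Icc hθ)]
  unfold ferrersP fF H0
  rw [iteratedDeriv_legendreP, e4]

lemma inner_eq {a e b η : ℝ} (ha : 0 < a) (he : 0 < e) (hη : e < η) (hb : b ∈ Set.Icc 0 π) (n m : ℕ) (φ t : ℝ) :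
    (∫ s in (-1 : ℝ)..1,
    ((((inner ℝ (unitNormalP a (cosh η) s t) (prolate a (cosh e) (cos b) φ - prolate a (cosh η) s t) : ℝ) /
        (4 * Real.pi * ‖prolate a (cosh e) (cos b) φ - prolate a (cosh η) s t‖ ^ 3)) * areaElemP a (cosh η) s : ℝ) : ℂ) * sphY n m s t)
    = ((sinh η / (4 * π) * (Real.sqrt ((2 * (n : ℝ) + 1) / (4 * Real.pi)) *
      Real.sqrt (((n - m).factorial : ℝ) / ((n + m).factorial : ℝ))) * hJ (cosh e * cos b) (sinh e * sin b) n m η (t - φ) : ℝ) : ℂ)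
      * Complex.exp (Complex.I * m * t) := by
  set N := Real.sqrt ((2 * (n : ℝ) + 1) / (4 * Real.pi)) *
      Real.sqrt (((n - m).factorial : ℝ) / ((n + m).factorial : ℝ)) with hN
  set g : ℝ → ℝ := fun s => fF n m (arccos s) * k1 (cosh e * cos b) (sinh e * sin b) η (arccos s) (t - φ) with hg
  have hgc : Continuous g := by
    have h1 := fF_cont n m
    have h2 := (k1_cont (b := b) he hη).comp (continuous_arccos.prodMk (continuous_const (y := t - φ)))
    exact (h1.comp continuous_arccos).mul h2
  have step : ∫ s in (-1:ℝ)..1, g s = hJ (cosh e * cos b) (sinh e * sin b) n m η (t - φ) := by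
    have h := intervalIntegral.integral_deriv_smul_comp (a := π) (b := 0) (f := cos) (f' := fun x => - sin x) (g := g)
      (fun x _ => hasDerivAt_cos x) (by fun_prop) hgc
    rw [cos_pi, cos_zero] at h
    rw [← h, intervalIntegral.integral_symm, hJ, ← intervalIntegral.integral_neg]
    apply intervalIntegral.integral_congr
    intro θ hθ
    rw [Set.uIcc_of_le pi_pos.le] at hθ
    simp only [hg, Function.comp, smul_eq_mul, arccos_cos hθ.1 hθ.2]
    ring
  rw [← step]
  have : ∀ s ∈ Set.uIcc (-1:ℝ) 1, ((((inner ℝ (unitNormalP a (cosh η) s t) (prolate a (cosh e) (cos b) φ - prolate a (cosh η) s t) : ℝ) /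
        (4 * Real.pi * ‖prolate a (cosh e) (cos b) φ - prolate a (cosh η) s t‖ ^ 3)) * areaElemP a (cosh η) s : ℝ) : ℂ) * sphY n m s t
      = (((sinh η / (4 * π) * N) * g s : ℝ) : ℂ) * Complex.exp (Complex.I * m * t) := by
    intro s hs
    rw [Set.uIcc_of_le (by norm_num)] at hs
    have hθ : arccos s ∈ Set.Icc 0 π := ⟨arccos_nonneg s, arccos_le_pi s⟩
    have hc : cos (arccos s) = s := cos_arccos hs.1 hs.2
    have hk := kernel_eq (φ := φ) (t := t) ha he hη hb hθ
    have hf := ferrersP_cos n m hθ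
    rw [hc] at hk hf
    rw [hk]
    unfold sphY
    rw [← hN, hf, ← mul_assoc, ← Complex.ofReal_mul]
    congr 2
    simp only [hg]; ring
  rw [intervalIntegral.integral_congr this, intervalIntegral.integral_mul_const, intervalIntegral.integral_ofReal,
    intervalIntegral.integral_const_mul]

lemma outer_eq (h : ℝ → ℝ) (hc : Continuous h) (hev : ∀ τ, h (-τ) = h τ) (hp : ∀ τ, h (τ + 2*π) = h τ) (m : ℕ) (φ : ℝ) :
    ∫ t in (0:ℝ)..(2*π), (h (t - φ) : ℂ) * Complex.exp (Complex.I * m * t)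
      = ((∫ τ in (-π)..π, cos (m * τ) * h τ : ℝ) : ℂ) * Complex.exp (Complex.I * m * φ) := by
  have hexp : ∀ t : ℝ, Complex.exp (Complex.I * m * ((t + 2*π : ℝ) : ℂ)) = Complex.exp (Complex.I * m * t) := by
    intro t
    rw [Complex.exp_eq_exp_iff_exists_int]
    exact ⟨m, by push_cast; ring⟩
  have hper : Function.Periodic (fun t : ℝ => (h (t - φ) : ℂ) * Complex.exp (Complex.I * m * t)) (2*π) := by
    intro t
    simp only [hexp]
    rw [show t + 2*π - φ = (t - φ) + 2*π by ring, hp]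
  have h1 := hper.intervalIntegral_add_eq 0 (-π + φ)
  rw [zero_add, show -π + φ + 2*π = π + φ by ring] at h1
  rw [h1, ← intervalIntegral.integral_comp_add_right (fun t : ℝ => (h (t - φ) : ℂ) * Complex.exp (Complex.I * m * t)) φ]
  have h2 : ∀ τ : ℝ, (h (τ + φ - φ) : ℂ) * Complex.exp (Complex.I * m * ((τ + φ : ℝ) : ℂ))
      = (h τ : ℂ) * Complex.exp (Complex.I * m * τ) * Complex.exp (Complex.I * m * φ) := by
    intro τ
    rw [add_sub_cancel_right, mul_assoc (h τ : ℂ), ← Complex.exp_add]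
    congr 2; push_cast; ring
  simp only [h2]
  rw [intervalIntegral.integral_mul_const]
  congr 1
  set I := ∫ τ in (-π)..π, (h τ : ℂ) * Complex.exp (Complex.I * m * τ) with hI
  have hneg : I = ∫ τ in (-π)..π, (h τ : ℂ) * Complex.exp (-(Complex.I * m * τ)) := by
    rw [hI]
    have := intervalIntegral.integral_comp_neg (a := -π) (b := π) (fun τ : ℝ => (h τ : ℂ) * Complex.exp (Complex.I * m * τ))
    rw [neg_neg] at this
    rw [← this]
    apply intervalIntegral.integral_congr
    intro τ _
    simp [hev]
  have hadd : I + I = 2 * ((∫ τ in (-π)..π, cos (m * τ) * h τ : ℝ) : ℂ) := by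
    nth_rewrite 2 [hneg]
    rw [hI, ← intervalIntegral.integral_add, ← intervalIntegral.integral_ofReal, ← intervalIntegral.integral_const_mul]
    · apply intervalIntegral.integral_congr
      intro τ _
      simp only
      push_cast
      rw [Complex.cos]
      rw [show (m * τ : ℂ) * Complex.I = Complex.I * m * τ by ring,
        show -(m * τ : ℂ) * Complex.I = -(Complex.I * m * τ) by ring]
      ring
    · exact Continuous.intervalIntegrable (by fun_prop) _ _
    · exact Continuous.intervalIntegrable (by fun_prop) _ _
  linear_combination hadd / 2

lemma gI1_eq_hJ {e b η : ℝ} (he : 0 < e) (hη : e < η) (n m : ℕ) :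
    ∫ τ in (-π)..π, cos (m * τ) * hJ (cosh e * cos b) (sinh e * sin b) n m η τ
      = gI1 (cosh e * cos b) (sinh e * sin b) m (fF n m) η := by
  unfold gI1
  rw [KK_integral_symm]
  · rw [intervalIntegral.integral_of_le (by linarith [pi_pos]), integral_Icc_eq_integral_Ioc]
    congr 1
    funext τ
    rw [hJ, ← intervalIntegral.integral_const_mul, intervalIntegral.integral_of_le pi_pos.le, integral_Icc_eq_integral_Ioc]
    congr 1
    funext θ
    ring
  · apply Continuous.continuousOn
    have h1 := fF_cont n m
    have h2 := k1_cont (b := b) he hη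
    fun_prop

lemma assocQ_deriv (n m : ℕ) {η : ℝ} (hη : 0 < η) :
    deriv (assocQ n m) (cosh η) = qF1 n m η * (sinh η)⁻¹ := by
  have hc : 1 < cosh η := one_lt_cosh.2 hη.ne'
  have ha : arcosh (cosh η) = η := arcosh_cosh hη.le
  have h1 : assocQ n m =ᶠ[𝓝 (cosh η)] fun x => qF n m (arcosh x) := by
    filter_upwards [Ioi_mem_nhds hc] with x hx
    have hx' : 1 < x := hx
    unfold assocQ qF H0
    rw [iteratedDeriv_legendreQ n m x hx', sinh_arcosh hx'.le, cosh_arcosh hx'.le]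
  rw [h1.deriv_eq]
  have h2 := hasDerivAt_arcosh (x := cosh η) hc
  have e2 : √(cosh η^2-1) = sinh η := by
    rw [show cosh η^2 - 1 = sinh η^2 by linarith [cosh_sq η], sqrt_sq (sinh_nonneg_iff.2 hη.le)]
  rw [e2] at h2
  have h3 := qF_d n m hη
  rw [← ha] at h3
  have := h3.comp (cosh η) h2
  rw [ha] at this
  exact this.deriv

end PartJ

theorem doubleLayer_interior_eval (a : ℝ) (ha : 0 < a) (u₀ : ℝ) (hu₀ : 1 < u₀)
    (n m : ℕ) (hm : m ≤ n) (u v φ : ℝ) (hu1 : 1 < u) (hu2 : u < u₀)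
    (hv : v ∈ Set.Ioo (-1 : ℝ) 1) :
    doubleLayerP a u₀ (fun s t => sphY n m s t) (prolate a u v φ) =
      (((((n - m).factorial : ℝ) / ((n + m).factorial : ℝ)) * (-1 : ℝ) ^ m * (u₀ ^ 2 - 1) *
          deriv (assocQ n m) u₀ * assocP n m u : ℝ) : ℂ) * sphY n m v φ := by
  obtain ⟨e, he, rfl⟩ : ∃ e, 0 < e ∧ cosh e = u := ⟨arcosh u, arcosh_pos hu1, cosh_arcosh hu1.le⟩
  obtain ⟨η, hη0, rfl⟩ : ∃ e, 0 < e ∧ cosh e = u₀ := ⟨arcosh u₀, arcosh_pos hu₀, cosh_arcosh hu₀.le⟩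
  obtain ⟨b, hb, rfl⟩ : ∃ b ∈ Set.Ioo 0 π, cos b = v :=
    ⟨arccos v, ⟨arccos_pos.2 hv.2, arccos_lt_pi.2 hv.1⟩, cos_arccos hv.1.le hv.2.le⟩
  have hη : e < η := by
    rw [cosh_lt_cosh, abs_of_pos he, abs_of_pos hη0] at hu2; exact hu2
  have hb' : b ∈ Set.Icc 0 π := Set.Ioo_subset_Icc_self hb
  have hsh : 0 < sinh η := sinh_pos_iff.2 hη0
  have hval := gI1_value he hb n m hm hη
  unfold doubleLayerP
  simp only [inner_eq ha he hη hb' n m φ]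
  simp only [Complex.ofReal_mul _ (hJ _ _ _ _ _ _), mul_assoc (Complex.ofReal _) (Complex.ofReal (hJ _ _ _ _ _ _)) _]
  rw [intervalIntegral.integral_const_mul, outer_eq _ (hJ_cont he hη n m) (hJ_even _ _ n m η) (hJ_per _ _ n m η) m φ,
    gI1_eq_hJ he hη]
  unfold sphY
  rw [ferrersP_cos n m hb', assocQ_deriv n m hη0]
  rw [← mul_assoc, ← Complex.ofReal_mul]
  rw [← mul_assoc (Complex.ofReal _) (Complex.ofReal _) (Complex.exp _), ← Complex.ofReal_mul]
  congr 2
  have hP : assocP n m (cosh e) = pF n m e := by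
    have e2 : √(cosh e^2-1) = sinh e := by
      rw [show cosh e^2 - 1 = sinh e^2 by linarith [cosh_sq e], sqrt_sq (sinh_nonneg_iff.2 he.le)]
    unfold assocP pF H0
    rw [iteratedDeriv_legendreP, e2]
  rw [hP, show cosh η^2 - 1 = sinh η^2 by linarith [cosh_sq η]]
  have hfac : ((n+m).factorial : ℝ) ≠ 0 := by positivity
  have hsq : ((-1:ℝ)^m) * (-1)^m = 1 := by rw [← mul_pow]; simp
  have hG : gI1 (cosh e * cos b) (sinh e * sin b) m (fF n m) η
      = 4*π*pF n m e*fF n m b*qF1 n m η*((n-m).factorial : ℝ) * (-1)^m / ((n+m).factorial : ℝ) := by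
    rw [eq_div_iff hfac]
    rw [← hval]
    linear_combination (- gI1 (cosh e * cos b) (sinh e * sin b) m (fF n m) η * ((n+m).factorial : ℝ)) * hsq
  rw [hG]
  generalize √((2 * (n:ℝ) + 1) / (4 * π)) = N1
  generalize √(((n-m).factorial : ℝ) / ((n+m).factorial : ℝ)) = N2
  field_simp
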